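/- arXiv:2408.01992 — 2 statements merged into one kernel-verified Lean document; each statement's English description precedes it below -/
import Mathlib

section
/- Let n ≥ 2, let M be a closed connected topological n-manifold, and let f : M → M be a regular homeomorphism such that no point of its chain recurrent set has Morse index 1 or n−1. Then f is polar: the chain recurrent set R_f contains exactly one point of Morse index 0 (a unique sink, which is a fixed point of f) and exactly one point of Morse index n (a unique source, which is a fixed point of f). -/
open Filter Topology

/-- `M` is a topological `n`-manifold without boundary: every point has an open
neighbourhood homeomorphic to `ℝⁿ`. -/
def IsChartedEuclidean (n : ℕ) (M : Type*) [TopologicalSpace M] : Prop :=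
  ∀ x : M, ∃ U : Set M, IsOpen U ∧ x ∈ U ∧ Nonempty (U ≃ₜ EuclideanSpace ℝ (Fin n))

/-- An `ε`-chain of the map `f` from `x` to `y`. -/
def IsEpsChain {M : Type*} [PseudoMetricSpace M] (f : M → M) (ε : ℝ) (x y : M) : Prop :=
  ∃ k : ℕ, 0 < k ∧ ∃ (c : Fin (k + 1) → M) (m : Fin k → ℕ),
    c 0 = x ∧ c (Fin.last k) = y ∧ (∀ i, 1 ≤ m i) ∧
    ∀ i : Fin k, dist (f^[m i] (c i.castSucc)) (c i.succ) < ε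

/-- A point is chain recurrent for `f` if for every `ε > 0` there is an `ε`-chain
from the point to itself. -/
def ChainRecurrent {M : Type*} [PseudoMetricSpace M] (f : M → M) (x : M) : Prop :=
  ∀ ε : ℝ, 0 < ε → IsEpsChain f ε x x

/-- The chain recurrent set of `f`. -/
def chainRecurrentSet {M : Type*} [PseudoMetricSpace M] (f : M → M) : Set M :=
  {x | ChainRecurrent f x}

/-- The canonical hyperbolic model map `a_{i,δu,δs} : ℝⁿ → ℝⁿ`,
`a(x₁,…,xₙ) = (2δu·x₁, 2x₂, …, 2x_i, (δs/2)·x_{i+1}, x_{i+2}/2, …, xₙ/2)`. -/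
noncomputable def modelMap (n i : ℕ) (δu δs : ℝ) :
    EuclideanSpace ℝ (Fin n) → EuclideanSpace ℝ (Fin n) :=
  fun x => WithLp.toLp 2 fun j =>
    if (j : ℕ) < i then (if (j : ℕ) = 0 then 2 * δu else 2) * x j
    else (if (j : ℕ) = i then δs / 2 else 1 / 2) * x j

/-- A point `p` is a topologically hyperbolic periodic point of the homeomorphism `f`
with Morse index `i`: `p` is periodic of some least period `m` and `f^m` is conjugate,
in a neighbourhood of `p`, to the model map `a_{i,δu,δs}` on `ℝⁿ`. -/
def TopHyperbolic {M : Type*} [MetricSpace M] (n : ℕ) (f : M ≃ₜ M) (p : M) (i : ℕ) : Prop :=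
  ∃ m : ℕ, 0 < m ∧ Function.IsPeriodicPt (⇑f) m p ∧ Function.minimalPeriod (⇑f) p = m ∧
    ∃ δu δs : ℝ, (δu = 1 ∨ δu = -1) ∧ (δs = 1 ∨ δs = -1) ∧
      ∃ (U : Set M) (_ : IsOpen U) (_ : p ∈ U) (h : U ≃ₜ EuclideanSpace ℝ (Fin n)),
        ∀ x : U, (⇑f)^[m] (x : M) = ((h.symm (modelMap n i δu δs (h x)) : U) : M)

/-- A homeomorphism is regular if its chain recurrent set is finite and consists of
topologically hyperbolic periodic points (of some Morse index `i ∈ {0,…,n}`). -/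
def RegularHomeo {M : Type*} [MetricSpace M] (n : ℕ) (f : M ≃ₜ M) : Prop :=
  (chainRecurrentSet (⇑f)).Finite ∧
    ∀ p ∈ chainRecurrentSet (⇑f), ∃ i ≤ n, TopHyperbolic n f p i

/-- The stable manifold `W^s_p = {q : f^{km}(q) → p, k → +∞}`, `m` the least period. -/
def stableSet {M : Type*} [MetricSpace M] (f : M ≃ₜ M) (p : M) : Set M :=
  {q | Tendsto (fun k : ℕ => (⇑f)^[k * Function.minimalPeriod (⇑f) p] q) atTop (𝓝 p)}

/-- The unstable manifold `W^u_p = {q : f^{-km}(q) → p, k → +∞}`, `m` the least period. -/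
def unstableSet {M : Type*} [MetricSpace M] (f : M ≃ₜ M) (p : M) : Set M :=
  {q | Tendsto (fun k : ℕ => (⇑f.symm)^[k * Function.minimalPeriod (⇑f) p] q) atTop (𝓝 p)}

/-- A saddle periodic point: topologically hyperbolic of Morse index `0 < i < n`. -/
def IsSaddlePt {M : Type*} [MetricSpace M] (n : ℕ) (f : M ≃ₜ M) (p : M) : Prop :=
  ∃ i, 0 < i ∧ i < n ∧ TopHyperbolic n f p i

/-- A subset `S ⊆ M` is a locally flat `k`-dimensional submanifold of the `n`-manifold
`M`: every `x ∈ S` has an open neighbourhood `U` and a homeomorphism `ψ : U ≃ₜ ℝⁿ` with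
`ψ(U ∩ S) = ℝᵏ × {0}`. -/
def IsLocallyFlatSubmanifold (n k : ℕ) {M : Type*} [TopologicalSpace M] (S : Set M) : Prop :=
  ∀ x ∈ S, ∃ U : Set M, IsOpen U ∧ x ∈ U ∧
    ∃ ψ : U ≃ₜ EuclideanSpace ℝ (Fin n),
      ψ '' {y : U | (y : M) ∈ S} = {y | ∀ j : Fin n, k ≤ (j : ℕ) → y j = 0}
/-- Local hyperbolic linear model of `g` at `p`, with expanding coordinates `P`. -/
def HypModel {n : ℕ} {M : Type*} [TopologicalSpace M] (g : M → M) (p : M)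
    (P : Fin n → Prop) : Prop :=
  ∃ (l : Fin n → ℝ) (φ : (Fin n → ℝ) → M), IsOpenEmbedding φ ∧
    (∀ j, P j → 2 ≤ |l j|) ∧ (∀ j, ¬ P j → l j ≠ 0 ∧ |l j| ≤ 1 / 2) ∧ φ 0 = p ∧
    ∀ v, g (φ v) = φ (l * v)

/-- `p` attracts a neighbourhood. -/
def AttrPt {M : Type*} [TopologicalSpace M] (g : M → M) (p : M) : Prop :=
  ∀ᶠ x in 𝓝 p, Tendsto (fun k : ℕ => g^[k] x) atTop (𝓝 p)

section core
variable {n : ℕ} {M : Type*}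

theorem model_iter {g : M → M} {l : Fin n → ℝ} {φ : (Fin n → ℝ) → M}
    (h : ∀ v, g (φ v) = φ (l * v)) (k : ℕ) (v : Fin n → ℝ) :
    g^[k] (φ v) = φ (l ^ k * v) := by
  induction k generalizing v with
  | zero => simp
  | succ k ih => rw [Function.iterate_succ_apply, h, ih, pow_succ, mul_assoc]

theorem model_inv {g g' : M → M} (hl : Function.LeftInverse g' g) {l : Fin n → ℝ}
    {φ : (Fin n → ℝ) → M} (h0 : ∀ j, l j ≠ 0)
    (h : ∀ v, g (φ v) = φ (l * v)) (v : Fin n → ℝ) : g' (φ v) = φ (l⁻¹ * v) := by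
  have : v = l * (l⁻¹ * v) := by
    ext j; simp [h0 j]
  conv_lhs => rw [this, ← h, hl]

theorem model_ne {P : Fin n → Prop} {l : Fin n → ℝ} (h1 : ∀ j, P j → 2 ≤ |l j|)
    (h2 : ∀ j, ¬ P j → l j ≠ 0 ∧ |l j| ≤ 1 / 2) (j : Fin n) : l j ≠ 0 := by
  by_cases hj : P j
  · intro h0
    have := h1 j hj
    rw [h0] at this
    norm_num at this
  · exact (h2 j hj).1

theorem HypModel.inv [TopologicalSpace M] {g g' : M → M} (hl : Function.LeftInverse g' g)
    {p : M} {P : Fin n → Prop} (H : HypModel g p P) : HypModel g' p (fun j => ¬ P j) := by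
  obtain ⟨l, φ, hφ, h1, h2, h3, h4⟩ := H
  refine ⟨l⁻¹, φ, hφ, ?_, ?_, h3, model_inv hl (model_ne h1 h2) h4⟩
  · intro j hj
    obtain ⟨ha, hb⟩ := h2 j hj
    rw [Pi.inv_apply, abs_inv]
    rw [le_inv_comm₀ (by norm_num) (abs_pos.2 ha)]
    linarith
  · intro j hj
    have hj := h1 j (not_not.1 hj)
    refine ⟨inv_ne_zero (model_ne h1 h2 j), ?_⟩
    rw [Pi.inv_apply, abs_inv, one_div]
    exact inv_anti₀ (by norm_num) hj

variable [TopologicalSpace M]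

theorem model_tendsto {P : Fin n → Prop} {l : Fin n → ℝ} {g : M → M} {φ : (Fin n → ℝ) → M}
    (hφ : Continuous φ) (h2 : ∀ j, ¬ P j → l j ≠ 0 ∧ |l j| ≤ 1 / 2)
    (h : ∀ v, g (φ v) = φ (l * v)) (v : Fin n → ℝ) (hv : ∀ j, P j → v j = 0) :
    Tendsto (fun k : ℕ => g^[k] (φ v)) atTop (𝓝 (φ 0)) := by
  simp_rw [model_iter h]
  refine (hφ.tendsto 0).comp ?_
  rw [tendsto_pi_nhds]
  intro j
  by_cases hj : P j
  · simp [hv j hj]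
  · have : Tendsto (fun k : ℕ => l j ^ k * v j) atTop (𝓝 (0 * v j)) := by
      refine Tendsto.mul_const _ (tendsto_pow_atTop_nhds_zero_of_abs_lt_one ?_)
      linarith [(h2 j hj).2]
    simpa using this

theorem model_conv {P : Fin n → Prop} {l : Fin n → ℝ} {g g' : M → M}
    (hl : Function.LeftInverse g' g) {φ : (Fin n → ℝ) → M}
    (hφ : IsOpenEmbedding φ) (h1 : ∀ j, P j → 2 ≤ |l j|)
    (h2 : ∀ j, ¬ P j → l j ≠ 0 ∧ |l j| ≤ 1 / 2)
    (h : ∀ v, g (φ v) = φ (l * v)) (x : M)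
    (hx : Tendsto (fun k : ℕ => g^[k] x) atTop (𝓝 (φ 0))) :
    ∃ v, x = φ v ∧ ∀ j, P j → v j = 0 := by
  have h0 := model_ne h1 h2
  have hU : Set.range φ ∈ 𝓝 (φ 0) := hφ.isOpen_range.mem_nhds ⟨0, rfl⟩
  obtain ⟨k, w, hk⟩ := (hx.eventually hU).exists
  have hxv : x = φ (l⁻¹ ^ k * w) := by
    rw [← model_iter (model_inv hl h0 h) k w, hk]
    exact ((hl.iterate k) x).symm
  refine ⟨_, hxv, ?_⟩
  intro j hj
  set v := l⁻¹ ^ k * w with hvdef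
  rw [hxv] at hx
  simp_rw [model_iter h] at hx
  have h3 : Tendsto (fun k : ℕ => l ^ k * v) atTop (𝓝 0) :=
    hφ.isInducing.tendsto_nhds_iff.2 hx
  have h4 := (tendsto_pi_nhds.1 h3 j).abs
  have h5 : |v j| ≤ |(0 : Fin n → ℝ) j| := by
    refine ge_of_tendsto' h4 ?_
    intro k
    rw [Pi.mul_apply, Pi.pow_apply, abs_mul, abs_pow]
    have : 1 ≤ |l j| ^ k := one_le_pow₀ (by linarith [h1 j hj])
    nlinarith [abs_nonneg (v j)]
  simpa using h5

theorem model_attr_iff {g g' : M → M}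
    (hl : Function.LeftInverse g' g) {p : M} {P : Fin n → Prop} (H : HypModel g p P) :
    AttrPt g p ↔ ∀ j, ¬ P j := by
  obtain ⟨l, φ, hφ, h1, h2, rfl, h4⟩ := H
  constructor
  · intro ha j hj
    have hb : ∀ᶠ v in 𝓝 (0 : Fin n → ℝ), Tendsto (fun k : ℕ => g^[k] (φ v)) atTop (𝓝 (φ 0)) :=
      (hφ.continuous.tendsto 0).eventually ha
    have hc : ∀ᶠ v in 𝓝 (0 : Fin n → ℝ), v j = 0 := by
      filter_upwards [hb] with v hv
      obtain ⟨w, hw, hw'⟩ := model_conv hl hφ h1 h2 h4 _ hv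
      rw [hφ.injective hw]
      exact hw' j hj
    have hd : Tendsto (fun t : ℝ => (Pi.single j t : Fin n → ℝ)) (𝓝 0) (𝓝 0) := by
      have : Continuous (fun t : ℝ => (Pi.single j t : Fin n → ℝ)) := continuous_single (A := fun _ => ℝ) j
      simpa using this.tendsto 0
    have he := hd.eventually hc
    simp only [Pi.single_eq_same] at he
    obtain ⟨ε, hε, hball⟩ := Metric.eventually_nhds_iff.1 he
    have := hball (y := ε / 2) (by simp [abs_of_pos hε, hε])
    linarith
  · intro hP
    have hU : Set.range φ ∈ 𝓝 (φ 0) := hφ.isOpen_range.mem_nhds ⟨0, rfl⟩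
    filter_upwards [hU] with x hx
    obtain ⟨v, rfl⟩ := hx
    exact model_tendsto hφ.continuous h2 h4 v (fun j hj => absurd hj (hP j))

theorem basin_open {g g' : M → M}
    (hl : Function.LeftInverse g' g) {p : M} {P : Fin n → Prop} (H : HypModel g p P)
    (ha : AttrPt g p) : IsOpen {x | Tendsto (fun k : ℕ => g^[k] x) atTop (𝓝 p)} := by
  have hP := (model_attr_iff hl H).1 ha
  obtain ⟨l, φ, hφ, h1, h2, rfl, h4⟩ := H
  convert hφ.isOpen_range
  ext x
  constructor
  · intro hx
    obtain ⟨w, hw, hw'⟩ := model_conv hl hφ h1 h2 h4 _ hx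
    exact ⟨w, hw.symm⟩
  · rintro ⟨v, rfl⟩
    exact model_tendsto hφ.continuous h2 h4 v (fun j hj => absurd hj (hP j))

theorem basin_nowhere {g g' : M → M}
    (hl : Function.LeftInverse g' g) {p : M} {P : Fin n → Prop} (H : HypModel g p P)
    (ha : ¬ AttrPt g p) :
    Dense (closure {x | Tendsto (fun k : ℕ => g^[k] x) atTop (𝓝 p)})ᶜ := by
  rw [model_attr_iff hl H] at ha
  push Not at ha
  obtain ⟨j, hj⟩ := ha
  obtain ⟨l, φ, hφ, h1, h2, rfl, h4⟩ := H
  rw [← interior_eq_empty_iff_dense_compl]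
  by_contra hne
  obtain ⟨x, hx⟩ := Set.nonempty_iff_ne_empty.2 hne
  obtain ⟨y, hy, hyW⟩ := mem_closure_iff.1 (interior_subset hx) _ isOpen_interior hx
  obtain ⟨v, rfl, hv⟩ := model_conv hl hφ h1 h2 h4 _ hyW
  -- near v, all points are in the closure of W
  have hn : ∀ᶠ w in 𝓝 v, w j = 0 := by
    have : ∀ᶠ w in 𝓝 v, φ w ∈ interior (closure {x | Tendsto (fun k : ℕ => g^[k] x) atTop (𝓝 (φ 0))}) :=
      hφ.continuous.continuousAt.eventually (isOpen_interior.mem_nhds hy)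
    filter_upwards [this] with w hw
    have hw := interior_subset hw
    have hw2 : w ∈ closure {w : Fin n → ℝ | w j = 0} := by
      rw [mem_closure_iff]
      intro o ho hwo
      obtain ⟨z, ⟨u, hu, rfl⟩, hz⟩ := mem_closure_iff.1 hw _ (hφ.isOpenMap o ho) ⟨w, hwo, rfl⟩
      obtain ⟨u', huu, hu'⟩ := model_conv hl hφ h1 h2 h4 _ hz
      have := hφ.injective huu
      subst this
      exact ⟨u, hu, hu' j hj⟩
    rwa [(isClosed_eq (continuous_apply j) continuous_const).closure_eq] at hw2
  have hd : Tendsto (fun t : ℝ => v + (Pi.single j t : Fin n → ℝ)) (𝓝 0) (𝓝 v) := by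
    have : Continuous (fun t : ℝ => v + (Pi.single j t : Fin n → ℝ)) :=
      continuous_const.add (continuous_single (A := fun _ => ℝ) j)
    simpa using this.tendsto 0
  have he := hd.eventually hn
  simp only [Pi.add_apply, Pi.single_eq_same, hv j hj, zero_add] at he
  obtain ⟨ε, hε, hball⟩ := Metric.eventually_nhds_iff.1 he
  have := hball (y := ε / 2) (by simp [abs_of_pos hε, hε])
  linarith

/-- An invariant set accumulating at a hyperbolic point and missing its stable manifold
accumulates at its punctured unstable manifold. -/
theorem accumulates {P : Fin n → Prop} {l : Fin n → ℝ} {g : M → M}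
    {φ : (Fin n → ℝ) → M}
    (hφ : IsOpenEmbedding φ) (h1 : ∀ j, P j → 2 ≤ |l j|)
    (h2 : ∀ j, ¬ P j → l j ≠ 0 ∧ |l j| ≤ 1 / 2)
    (h : ∀ v, g (φ v) = φ (l * v)) (B : Set M) (hB : ∀ x ∈ B, g x ∈ B)
    (hBs : ∀ x ∈ B, ¬ Tendsto (fun k : ℕ => g^[k] x) atTop (𝓝 (φ 0)))
    (hc : φ 0 ∈ closure B) :
    ∃ v : Fin n → ℝ, v ≠ 0 ∧ (∀ j, ¬ P j → v j = 0) ∧ φ v ∈ closure B := by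
  have hBk : ∀ (k : ℕ) x, x ∈ B → g^[k] x ∈ B := by
    intro k
    induction k with
    | zero => intro x hx; exact hx
    | succ k ih => intro x hx; rw [Function.iterate_succ_apply]; exact ih _ (hB _ hx)
  have step : ∀ i : ℕ, ∃ w : Fin n → ℝ, ‖w‖ ≤ ‖l‖ + 1 ∧ (∃ j, P j ∧ 1 ≤ |w j|) ∧
      (∀ j, ¬ P j → |w j| ≤ 1 / ((i : ℝ) + 1)) ∧ φ w ∈ B := by
    intro i
    have hi : (0 : ℝ) < 1 / ((i : ℝ) + 1) := by positivity
    have hi1 : 1 / ((i : ℝ) + 1) ≤ 1 := by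
      rw [div_le_one (by positivity)]; linarith [(Nat.cast_nonneg i : (0 : ℝ) ≤ i)]
    obtain ⟨_, ⟨v, hv, rfl⟩, hvB⟩ := mem_closure_iff.1 hc _
      (hφ.isOpenMap _ (Metric.isOpen_ball (x := (0 : Fin n → ℝ)) (ε := 1 / ((i : ℝ) + 1))))
      ⟨0, Metric.mem_ball_self hi, rfl⟩
    have hvn : ‖v‖ < 1 / ((i : ℝ) + 1) := by simpa using hv
    have hvj : ∀ j, |v j| < 1 / ((i : ℝ) + 1) := fun j =>
      lt_of_le_of_lt (norm_le_pi_norm v j) hvn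
    have hex : ∃ j, P j ∧ v j ≠ 0 := by
      by_contra hcon
      push Not at hcon
      exact hBs _ hvB (model_tendsto hφ.continuous h2 h v hcon)
    obtain ⟨j0, hj0, hvj0⟩ := hex
    have hexk : ∃ k : ℕ, ∃ j, P j ∧ 1 ≤ |(l ^ k * v) j| := by
      obtain ⟨k, hk⟩ := pow_unbounded_of_one_lt (1 / |v j0|) (by norm_num : (1 : ℝ) < 2)
      refine ⟨k, j0, hj0, ?_⟩
      rw [Pi.mul_apply, Pi.pow_apply, abs_mul, abs_pow]
      have hpos := abs_pos.2 hvj0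
      rw [div_lt_iff₀ hpos] at hk
      have : (2 : ℝ) ^ k ≤ |l j0| ^ k := pow_le_pow_left₀ (by norm_num) (h1 _ hj0) k
      nlinarith
    classical
    have hspec := Nat.find_spec hexk
    have hmin := fun m (hm : m < Nat.find hexk) => Nat.find_min hexk hm
    set k := Nat.find hexk with hkdef
    have hst : ∀ (m : ℕ) j, ¬ P j → |(l ^ m * v) j| ≤ 1 / ((i : ℝ) + 1) := by
      intro m j hj
      rw [Pi.mul_apply, Pi.pow_apply, abs_mul, abs_pow]
      have : |l j| ^ m ≤ 1 := pow_le_one₀ (abs_nonneg _) (by linarith [(h2 j hj).2])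
      have := hvj j
      nlinarith [abs_nonneg (v j)]
    have hk0 : k ≠ 0 := by
      intro h0
      rw [h0] at hspec
      obtain ⟨j, -, hj⟩ := hspec
      have := hvj j
      simp at hj
      linarith
    obtain ⟨m, hm⟩ := Nat.exists_eq_succ_of_ne_zero hk0
    have hmm := hmin m (by omega)
    push Not at hmm
    refine ⟨l ^ k * v, ?_, hspec, hst k, ?_⟩
    · rw [pi_norm_le_iff_of_nonneg (by positivity)]
      intro j
      rw [Real.norm_eq_abs]
      by_cases hj : P j
      · have e : (l ^ k * v) j = l j * (l ^ m * v) j := by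
          rw [hm]; simp [pow_succ]; ring
        rw [e, abs_mul]
        have a1 := hmm j hj
        have a2 : |l j| ≤ ‖l‖ := norm_le_pi_norm l j
        nlinarith [abs_nonneg (l j)]
      · have := hst k j hj
        linarith [norm_nonneg l]
    · rw [← model_iter h]
      exact hBk _ _ hvB
  choose w hw1 hw2 hw3 hw4 using step
  obtain ⟨a, ha, s, hs, hlim⟩ := (isCompact_closedBall (0 : Fin n → ℝ) (‖l‖ + 1)).tendsto_subseq
    (x := w) (fun i => by simpa using hw1 i)
  refine ⟨a, ?_, ?_, ?_⟩
  · have hcl : IsClosed {w : Fin n → ℝ | ∃ j, P j ∧ 1 ≤ |w j|} := by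
      have : {w : Fin n → ℝ | ∃ j, P j ∧ 1 ≤ |w j|} = ⋃ j, {w | P j ∧ 1 ≤ |w j|} := by
        ext; simp
      rw [this]
      refine isClosed_iUnion_of_finite fun j => ?_
      by_cases hj : P j
      · simp only [hj, true_and]
        exact isClosed_le continuous_const (continuous_apply j).abs
      · simp [hj]
    obtain ⟨j, -, hj⟩ := hcl.mem_of_tendsto hlim (Eventually.of_forall fun i => hw2 (s i))
    rintro rfl
    norm_num at hj
  · intro j hj
    have t1 := (tendsto_pi_nhds.1 hlim j).abs
    have t2 := (tendsto_one_div_add_atTop_nhds_zero_nat (𝕜 := ℝ)).comp hs.tendsto_atTop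
    have := le_of_tendsto_of_tendsto' t1 t2 (fun i => hw3 (s i) j hj)
    exact abs_nonpos_iff.1 this
  · exact mem_closure_of_tendsto ((hφ.continuous.tendsto a).comp hlim)
      (Eventually.of_forall fun i => hw4 (s i))

theorem unstable_connected {P : Fin n → Prop} (hP : ∃ a b, a ≠ b ∧ P a ∧ P b) :
    IsPreconnected {v : Fin n → ℝ | v ≠ 0 ∧ ∀ j, ¬ P j → v j = 0} := by
  classical
  have hr : 1 < Module.rank ℝ ({j // P j} → ℝ) := by
    rw [rank_fun']
    obtain ⟨a, b, hab, ha, hb⟩ := hP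
    have : 1 < Fintype.card {j // P j} :=
      Fintype.one_lt_card_iff.2 ⟨⟨a, ha⟩, ⟨b, hb⟩, by simpa using hab⟩
    exact_mod_cast this
  have hcon := (isConnected_compl_singleton_of_one_lt_rank hr (0 : {j // P j} → ℝ)).isPreconnected
  let e : ({j // P j} → ℝ) → (Fin n → ℝ) := fun u j => if hj : P j then u ⟨j, hj⟩ else 0
  have he : Continuous e := by
    refine continuous_pi fun j => ?_
    by_cases hj : P j
    · simp only [e, hj, dif_pos]; exact continuous_apply _
    · simp only [e, hj, dif_neg, not_false_eq_true]; exact continuous_const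
  convert hcon.image e he.continuousOn
  ext v
  constructor
  · rintro ⟨hv, hv'⟩
    have hev : e (fun j => v j) = v := by
      ext j
      by_cases hj : P j
      · simp [e, hj]
      · simp [e, hj, hv' j hj]
    refine ⟨fun j => v j, ?_, hev⟩
    intro h0
    apply hv
    rw [← hev, show (fun j : {j // P j} => v j) = 0 from h0]
    ext j
    simp [e]
  · rintro ⟨u, hu, rfl⟩
    refine ⟨fun h0 => hu ?_, fun j hj => by simp [e, hj]⟩
    show u = 0
    ext ⟨j, hj⟩
    have := congrFun h0 j
    simpa [e, hj] using this

end core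

theorem core_unique {n : ℕ} {M : Type*} [TopologicalSpace M] [T2Space M] [BaireSpace M]
    [ConnectedSpace M] (g g' : M → M) (hg : Continuous g)
    (hl : Function.LeftInverse g' g)
    (R : Set M) (hR : R.Finite) (hfix : ∀ p ∈ R, g p = p)
    (hconv : ∀ x, ∃ p ∈ R, Tendsto (fun k : ℕ => g^[k] x) atTop (𝓝 p))
    (lt : M → M → Prop) (hlt : ∀ x, ¬ lt x x) (htr : ∀ x y z, lt x y → lt y z → lt x z)
    (hac : ∀ p ∈ R, ∀ p' ∈ R, ∀ x, x ∉ R → Tendsto (fun k : ℕ => g'^[k] x) atTop (𝓝 p) →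
      Tendsto (fun k : ℕ => g^[k] x) atTop (𝓝 p') → lt p' p)
    (hmod : ∀ p ∈ R, ∃ P : Fin n → Prop, HypModel g p P ∧
      ((∃ j, P j) → ∃ a b, a ≠ b ∧ P a ∧ P b)) :
    ∃ p ∈ R, AttrPt g p ∧ ∀ q ∈ R, AttrPt g q → q = p := by
  let W : M → Set M := fun p => {x | Tendsto (fun k : ℕ => g^[k] x) atTop (𝓝 p)}
  have hWinv : ∀ p x, x ∈ W p → g x ∈ W p := by
    intro p x hx
    have := (tendsto_add_atTop_iff_nat 1).2 hx
    simpa [W, Function.iterate_succ_apply] using this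
  have hopen : ∀ p ∈ R, AttrPt g p → IsOpen (W p) := by
    intro p hp ha
    obtain ⟨P, H, -⟩ := hmod p hp
    exact basin_open hl H ha
  have hself : ∀ p ∈ R, p ∈ W p := by
    intro p hp
    have : ∀ k : ℕ, g^[k] p = p := fun k => Function.iterate_fixed (hfix p hp) k
    simp [W, this]
  have hdense : Dense {x | ∃ p ∈ R, AttrPt g p ∧ x ∈ W p} := by
    have hd : Dense (⋂ p ∈ {p ∈ R | ¬ AttrPt g p}, (closure (W p))ᶜ) := by
      refine dense_biInter_of_isOpen (fun p _ => isClosed_closure.isOpen_compl)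
        ((hR.subset (Set.sep_subset _ _)).countable) ?_
      rintro p ⟨hp, ha⟩
      obtain ⟨P, H, -⟩ := hmod p hp
      exact basin_nowhere hl H ha
    refine hd.mono ?_
    intro x hx
    obtain ⟨p, hp, hpx⟩ := hconv x
    refine ⟨p, hp, ?_, hpx⟩
    by_contra ha
    simp only [Set.mem_iInter] at hx
    exact hx p ⟨hp, ha⟩ (subset_closure hpx)
  obtain ⟨x0, ω, hω, haω, -⟩ := hdense.nonempty
  refine ⟨ω, hω, haω, ?_⟩
  intro ω' hω' haω'
  by_contra hne
  let A : Set M := W ω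
  let B : Set M := {x | ∃ p ∈ R, AttrPt g p ∧ p ≠ ω ∧ x ∈ W p}
  have hA : IsOpen A := hopen _ hω haω
  have hB : IsOpen B := by
    have : B = ⋃ p ∈ {p | p ∈ R ∧ AttrPt g p ∧ p ≠ ω}, W p := by
      ext x
      simp only [B, Set.mem_iUnion, Set.mem_ofPred_eq, exists_prop, and_assoc]
    rw [this]
    exact isOpen_biUnion fun p hp => hopen p hp.1 hp.2.1
  have hAi : ∀ x ∈ A, g x ∈ A := fun x hx => hWinv _ _ hx
  have hBi : ∀ x ∈ B, g x ∈ B := by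
    rintro x ⟨p, a, b, c, d⟩
    exact ⟨p, a, b, c, hWinv _ _ d⟩
  have hAB : Disjoint A B := by
    rw [Set.disjoint_left]
    rintro x hx ⟨p, a, b, c, d⟩
    exact c (tendsto_nhds_unique d hx)
  have hcov : closure A ∪ closure B = Set.univ := by
    rw [← closure_union, ← dense_iff_closure_eq]
    refine hdense.mono ?_
    rintro x ⟨p, a, b, c⟩
    by_cases hp : p = ω
    · subst hp; left; exact c
    · right; exact ⟨p, a, b, hp, c⟩
  let Z := closure A ∩ closure B
  have hZc : IsClosed Z := isClosed_closure.inter isClosed_closure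
  have hZi : ∀ x ∈ Z, g x ∈ Z := fun x hx =>
    ⟨map_mem_closure hg hx.1 hAi, map_mem_closure hg hx.2 hBi⟩
  have hZk : ∀ (k : ℕ) x, x ∈ Z → g^[k] x ∈ Z := by
    intro k
    induction k with
    | zero => intro x hx; exact hx
    | succ k ih => intro x hx; rw [Function.iterate_succ_apply]; exact ih _ (hZi _ hx)
  have hZne : Z.Nonempty := by
    have := isPreconnected_closed_iff.1 (isPreconnected_univ (α := M)) _ _
      (isClosed_closure (s := A)) (isClosed_closure (s := B)) hcov.symm.subset
      ⟨ω, trivial, subset_closure (hself _ hω)⟩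
      ⟨ω', trivial, subset_closure ⟨ω', hω', haω', hne, hself _ hω'⟩⟩
    simpa using this
  have hZA : ∀ x ∈ Z, x ∉ A := fun x hx hxA =>
    Set.disjoint_left.1 (hAB.closure_right hA) hxA hx.2
  have hZB : ∀ x ∈ Z, x ∉ B := fun x hx hxB =>
    Set.disjoint_left.1 (hAB.closure_left hB) hx.1 hxB
  have hlimZ : ∀ x ∈ Z, ∃ p ∈ R, p ∈ Z ∧ Tendsto (fun k : ℕ => g^[k] x) atTop (𝓝 p) := by
    intro x hx
    obtain ⟨p, hp, hpx⟩ := hconv x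
    exact ⟨p, hp, hZc.mem_of_tendsto hpx (Eventually.of_forall fun k => hZk k x hx), hpx⟩
  -- a minimal point
  obtain ⟨p, ⟨hpR, hpZ⟩, hpmin⟩ : ∃ p ∈ R ∩ Z, ∀ q ∈ R ∩ Z, ¬ lt q p := by
    have : IsStrictOrder M lt := { irrefl := hlt, trans := htr }
    have hwf : (R ∩ Z).WellFoundedOn lt := (hR.subset Set.inter_subset_left).wellFoundedOn
    obtain ⟨z, hz⟩ := hZne
    obtain ⟨q, hq, hqZ, -⟩ := hlimZ z hz
    obtain ⟨m, -, hm⟩ := WellFounded.has_min hwf Set.univ ⟨⟨q, hq, hqZ⟩, trivial⟩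
    exact ⟨m, m.2, fun q hq => hm ⟨q, hq⟩ trivial⟩
  have hpna : ¬ AttrPt g p := by
    intro ha
    by_cases hpω : p = ω
    · exact hZA p hpZ (by rw [hpω]; exact hself _ hω)
    · exact hZB p hpZ ⟨p, hpR, ha, hpω, hself _ hpR⟩
  obtain ⟨P, H, hP2⟩ := hmod p hpR
  have hPne : ∃ j, P j := by
    by_contra hcon
    push Not at hcon
    exact hpna ((model_attr_iff hl H).2 hcon)
  obtain ⟨l, φ, hφ, h1, h2, rfl, h4⟩ := H
  let C : Set M := φ '' {v : Fin n → ℝ | v ≠ 0 ∧ ∀ j, ¬ P j → v j = 0}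
  have hC : IsPreconnected C :=
    (unstable_connected (hP2 hPne)).image φ hφ.continuous.continuousOn
  have hl0 := model_ne h1 h2
  have hCZ : ∀ x ∈ C, x ∉ Z := by
    rintro _ ⟨v, ⟨hv0, hv⟩, rfl⟩ hxZ
    obtain ⟨q, hq, hqZ, hqx⟩ := hlimZ _ hxZ
    refine hpmin q ⟨hq, hqZ⟩ (hac _ hpR q hq (φ v) ?_ ?_ hqx)
    · intro hvR
      have := hfix _ hvR
      rw [h4] at this
      have := hφ.injective this
      apply hv0
      ext j
      by_cases hj : P j
      · have e := congrFun this j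
        have e2 : (l j - 1) * v j = 0 := by
          simp only [Pi.mul_apply] at e
          linarith
        rcases mul_eq_zero.1 e2 with e3 | e3
        · have := h1 j hj
          rw [show l j = 1 by linarith] at this
          norm_num at this
        · exact e3
      · exact hv j hj
    · refine model_tendsto (P := fun j => ¬ P j) (l := l⁻¹) hφ.continuous ?_
        (model_inv hl hl0 h4) v hv
      intro j hj
      have hj := h1 j (not_not.1 hj)
      refine ⟨inv_ne_zero (hl0 j), ?_⟩
      rw [Pi.inv_apply, abs_inv, one_div]
      exact inv_anti₀ (by norm_num) hj
  have hAs : ∀ x ∈ A, ¬ Tendsto (fun k : ℕ => g^[k] x) atTop (𝓝 (φ 0)) := by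
    intro x hx hx'
    have := tendsto_nhds_unique hx hx'
    exact hpna (this ▸ haω)
  have hBs : ∀ x ∈ B, ¬ Tendsto (fun k : ℕ => g^[k] x) atTop (𝓝 (φ 0)) := by
    rintro x ⟨q, a, b, c, d⟩ hx'
    have := tendsto_nhds_unique d hx'
    exact hpna (this ▸ b)
  obtain ⟨v, hv0, hv, hvA⟩ := accumulates hφ h1 h2 h4 A hAi hAs hpZ.1
  obtain ⟨w, hw0, hw, hwB⟩ := accumulates hφ h1 h2 h4 B hBi hBs hpZ.2
  obtain ⟨x, hxC, hx⟩ := isPreconnected_closed_iff.1 hC _ _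
      (isClosed_closure (s := A)) (isClosed_closure (s := B))
      (hcov ▸ Set.subset_univ _)
      ⟨φ v, ⟨v, ⟨hv0, hv⟩, rfl⟩, hvA⟩ ⟨φ w, ⟨w, ⟨hw0, hw⟩, rfl⟩, hwB⟩
  exact hCZ x hxC hx

/-- A single pseudo-orbit step. -/
def StepRel {M : Type*} [PseudoMetricSpace M] (f : M → M) (ε : ℝ) (x y : M) : Prop :=
  ∃ m : ℕ, 1 ≤ m ∧ dist (f^[m] x) y < ε

/-- `y` is reachable from `x` by `ε`-chains for all `ε`. -/
def Reach {M : Type*} [PseudoMetricSpace M] (f : M → M) (x y : M) : Prop :=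
  ∀ ε : ℝ, 0 < ε → Relation.TransGen (StepRel f ε) x y

theorem chain_of_transGen {M : Type*} [PseudoMetricSpace M] {f : M → M} {ε : ℝ} {x y : M}
    (h : Relation.TransGen (StepRel f ε) x y) : IsEpsChain f ε x y := by
  induction h using Relation.TransGen.head_induction_on with
  | single h =>
    obtain ⟨m, hm, hd⟩ := h
    refine ⟨1, one_pos, ![_, y], fun _ => m, rfl, rfl, fun _ => hm, ?_⟩
    intro i
    fin_cases i
    exact hd
  | head h _ ih =>
    obtain ⟨m, hm, hd⟩ := h
    obtain ⟨k, hk, c, l, h0, hlast, hl, hc⟩ := ih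
    refine ⟨k + 1, k.succ_pos, Fin.cons _ c, Fin.cons m l, rfl, ?_, ?_, ?_⟩
    · rw [← Fin.succ_last, Fin.cons_succ, hlast]
    · intro i
      refine Fin.cases ?_ (fun j => ?_) i
      · simpa using hm
      · simpa using hl j
    · intro i
      refine Fin.cases ?_ (fun j => ?_) i
      · simpa [h0] using hd
      · rw [← Fin.succ_castSucc]
        simpa using hc j

theorem cr_of_reach {M : Type*} [PseudoMetricSpace M] {f : M → M} {x : M}
    (h : Reach f x x) : x ∈ chainRecurrentSet f :=
  fun ε hε => chain_of_transGen (h ε hε)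

theorem Reach.trans {M : Type*} [PseudoMetricSpace M] {f : M → M} {x y z : M}
    (h : Reach f x y) (h' : Reach f y z) : Reach f x z :=
  fun ε hε => (h ε hε).trans (h' ε hε)

theorem cr_of_return {M : Type*} [PseudoMetricSpace M] {f : M → M} (hf : Continuous f) {y : M}
    (h : ∀ ε : ℝ, 0 < ε → ∃ z m, 2 ≤ m ∧ dist z y < ε ∧ dist (f^[m] z) y < ε) :
    y ∈ chainRecurrentSet f := by
  apply cr_of_reach
  intro ε hε
  obtain ⟨δ, hδ, hd⟩ := Metric.continuous_iff.1 hf y ε hε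
  obtain ⟨z, m, hm, h1, h2⟩ := h (min ε δ) (lt_min hε hδ)
  refine Relation.TransGen.head (b := f z) ⟨1, le_rfl, ?_⟩ (Relation.TransGen.single ⟨m - 1, by omega, ?_⟩)
  · rw [dist_comm]
    exact hd z (lt_of_lt_of_le h1 (min_le_right _ _))
  · rw [← Function.iterate_succ_apply, show (m - 1).succ = m by omega]
    exact lt_of_lt_of_le h2 (min_le_left _ _)

theorem conv_of_cluster {M : Type*} [TopologicalSpace M] [T2Space M] [CompactSpace M]
    {G : M → M} (hG : Continuous G) {R : Set M} (hR : R.Finite) (hfix : ∀ p ∈ R, G p = p)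
    (z : ℕ → M) (hz : ∀ k, z (k + 1) = G (z k))
    (hcl : ∀ y, MapClusterPt y atTop z → y ∈ R) : ∃ p ∈ R, Tendsto z atTop (𝓝 p) := by
  obtain ⟨U, hU, hdis⟩ := hR.t2_separation
  let V : M → Set M := fun p => U p ∩ G ⁻¹' (U p)
  have hVo : ∀ p, IsOpen (V p) := fun p => (hU p).2.inter ((hU p).2.preimage hG)
  have hVp : ∀ p ∈ R, p ∈ V p := fun p hp => ⟨(hU p).1, by
    show G p ∈ U p
    rw [hfix p hp]; exact (hU p).1⟩
  have huniq : ∀ p ∈ R, ∀ q ∈ R, ∀ x, x ∈ U p → x ∈ U q → p = q := by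
    intro p hp q hq x h1 h2
    by_contra hne
    exact Set.disjoint_left.1 (hdis hp hq hne) h1 h2
  have hO : IsOpen (⋃ p ∈ R, V p) := isOpen_biUnion fun p _ => hVo p
  have hev : ∀ᶠ k in atTop, z k ∈ ⋃ p ∈ R, V p := by
    by_contra hcon
    have hfr : ∃ᶠ k in atTop, z k ∈ (⋃ p ∈ R, V p)ᶜ := by
      simpa [Filter.Frequently] using hcon
    obtain ⟨x, hx, hxc⟩ := hO.isClosed_compl.isCompact.exists_mapClusterPt_of_frequently hfr
    exact hx (Set.mem_biUnion (hcl x hxc) (hVp x (hcl x hxc)))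
  obtain ⟨K, hK⟩ := eventually_atTop.1 hev
  have hK' : ∀ k ≥ K, ∃ p ∈ R, z k ∈ V p := by
    intro k hk
    have := hK k hk
    simpa only [Set.mem_iUnion, exists_prop] using this
  obtain ⟨p, hp, hzp⟩ := hK' K le_rfl
  have hall : ∀ k ≥ K, z k ∈ V p := by
    intro k hk
    induction k, hk using Nat.le_induction with
    | base => exact hzp
    | succ k hk ih =>
      obtain ⟨q, hq, hzq⟩ := hK' (k + 1) (by omega)
      have h1 : z (k + 1) ∈ U p := by rw [hz]; exact ih.2
      rw [huniq p hp q hq _ h1 hzq.1]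
      exact hzq
  refine ⟨p, hp, ?_⟩
  refine isCompact_univ.tendsto_nhds_of_unique_mapClusterPt (by simp) ?_
  intro y _ hy
  have hfr := hy.frequently ((hU y).2.mem_nhds (hU y).1)
  obtain ⟨k, h1, h2⟩ := (hfr.and_eventually (eventually_ge_atTop K)).exists
  exact huniq y (hcl y hy) p hp _ h1 (hall k h2).1

theorem attr_map {M : Type*} [TopologicalSpace M] {f : M ≃ₜ M} {g : M → M}
    (hc : Function.Commute f g) {p : M} (h : AttrPt g p) : AttrPt g (f p) := by
  have h1 : Tendsto f.symm (𝓝 (f p)) (𝓝 p) := by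
    simpa using f.symm.continuous.tendsto (f p)
  filter_upwards [h1.eventually h] with x hx
  have h2 := (f.continuous.tendsto p).comp hx
  refine h2.congr fun k => ?_
  have := (hc.iterate_right k) (f.symm x)
  simpa using this

theorem hypModel_of_topHyperbolic {n : ℕ} {M : Type*} [MetricSpace M] {f : M ≃ₜ M} {p : M}
    {i N : ℕ} (hN : 0 < N) (hd : Function.minimalPeriod f p ∣ N) (H : TopHyperbolic n f p i) :
    HypModel (n := n) (f^[N]) p (fun j => (j : ℕ) < i) := by
  obtain ⟨m, hm, hper, hmin, δu, δs, hu, hs, U, hU, hpU, h, hh⟩ := H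
  rw [hmin] at hd
  obtain ⟨k, rfl⟩ := hd
  have hk : k ≠ 0 := by rintro rfl; simp at hN
  let e : EuclideanSpace ℝ (Fin n) ≃ₜ (Fin n → ℝ) := (EuclideanSpace.equiv (Fin n) ℝ).toHomeomorph
  let d : Fin n → ℝ := fun j => if (j : ℕ) < i then (if (j : ℕ) = 0 then 2 * δu else 2)
    else (if (j : ℕ) = i then δs / 2 else 1 / 2)
  let φ : (Fin n → ℝ) → M := fun v => (h.symm (e.symm v) : M)
  have hφ : IsOpenEmbedding φ :=
    hU.isOpenEmbedding_subtypeVal.comp (h.symm.isOpenEmbedding.comp e.symm.isOpenEmbedding)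
  have hu1 : |δu| = 1 := by rcases hu with rfl | rfl <;> simp
  have hs1 : |δs| = 1 := by rcases hs with rfl | rfl <;> simp
  have hd1 : ∀ j : Fin n, (j : ℕ) < i → |d j| = 2 := by
    intro j hj
    simp only [d, hj, if_true]
    split_ifs <;> simp [abs_mul, hu1]
  have hd2 : ∀ j : Fin n, ¬ (j : ℕ) < i → |d j| = 1 / 2 := by
    intro j hj
    simp only [d, hj, if_false]
    split_ifs <;> simp [abs_div, hs1]
  have hmod : ∀ v, f^[m] (φ v) = φ (d * v) := by
    intro v
    rw [show φ v = ((h.symm (e.symm v) : U) : M) from rfl, hh]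
    simp only [φ, Homeomorph.apply_symm_apply]
    congr 2
    ext j
    by_cases hj : (j : ℕ) < i
    · simp [modelMap, d, hj, e]
    · simp [modelMap, d, hj, e]
  refine ⟨d ^ k, φ, hφ, ?_, ?_, ?_, ?_⟩
  · intro j hj
    rw [Pi.pow_apply, abs_pow, hd1 j hj]
    exact le_self_pow₀ (by norm_num) hk
  · intro j hj
    have : |(d ^ k) j| = (1 / 2) ^ k := by rw [Pi.pow_apply, abs_pow, hd2 j hj]
    refine ⟨fun h0 => ?_, ?_⟩
    · rw [h0] at this
      have h3 : (0 : ℝ) < (1 / 2) ^ k := by positivity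
      rw [← this] at h3
      simp at h3
    · rw [this]
      exact pow_le_of_le_one (by norm_num) (by norm_num) hk
  · have hpe : p = φ (e (h ⟨p, hpU⟩)) := by simp [φ]
    have h1 : f^[m] p = p := hper
    rw [hpe, hmod] at h1
    have h2 := hφ.injective h1
    have h3 : e (h ⟨p, hpU⟩) = 0 := by
      ext j
      have h4 := congrFun h2 j
      rw [Pi.mul_apply] at h4
      by_contra hne
      have h5 : d j = 1 := by
        have : (d j - 1) * e (h ⟨p, hpU⟩) j = 0 := by linarith
        rcases mul_eq_zero.1 this with h6 | h6
        · linarith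
        · exact absurd h6 hne
      by_cases hj : (j : ℕ) < i
      · have := hd1 j hj
        rw [h5] at this; norm_num at this
      · have := hd2 j hj
        rw [h5] at this; norm_num at this
    rw [hpe, h3]
  · intro v
    rw [Function.iterate_mul, model_iter hmod]

/-- a regular homeomorphism of a closed connected topological
`n`-manifold (`n ≥ 2`) with no chain recurrent points of Morse index `1` or `n-1`
is polar: it has exactly one sink and exactly one source, both fixed points. -/
theorem regular_no_codim_one_is_polar {n : ℕ} (hn : 2 ≤ n) {M : Type*}
    [MetricSpace M] [CompactSpace M] [ConnectedSpace M] [Nonempty M]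
    (hM : IsChartedEuclidean n M)
    (f : M ≃ₜ M) (hf : RegularHomeo n f)
    (hind : ∀ p ∈ chainRecurrentSet (⇑f), ∀ i : ℕ,
      TopHyperbolic n f p i → i ≠ 1 ∧ i ≠ n - 1) :
    (∃ ω : M, ω ∈ chainRecurrentSet (⇑f) ∧ TopHyperbolic n f ω 0 ∧ f ω = ω ∧
      ∀ ω' ∈ chainRecurrentSet (⇑f), TopHyperbolic n f ω' 0 → ω' = ω) ∧
    (∃ α : M, α ∈ chainRecurrentSet (⇑f) ∧ TopHyperbolic n f α n ∧ f α = α ∧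
      ∀ α' ∈ chainRecurrentSet (⇑f), TopHyperbolic n f α' n → α' = α) := by
  classical
  obtain ⟨hfin, hhyp⟩ := hf
  set R := chainRecurrentSet (⇑f) with hRdef
  -- a common period
  obtain ⟨N, hN, hdvd⟩ : ∃ N : ℕ, 0 < N ∧ ∀ p ∈ R, Function.minimalPeriod f p ∣ N := by
    refine ⟨∏ p ∈ hfin.toFinset, Function.minimalPeriod f p, ?_, ?_⟩
    · refine Finset.prod_pos fun p hp => ?_
      obtain ⟨i, -, m, hm, -, hmin, -⟩ := hhyp p (hfin.mem_toFinset.1 hp)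
      rw [hmin]; exact hm
    · intro p hp
      exact Finset.dvd_prod_of_mem _ (hfin.mem_toFinset.2 hp)
  set g : M → M := f^[N] with hgdef
  set g' : M → M := f.symm^[N] with hg'def
  have hg : Continuous g := f.continuous.iterate N
  have hg' : Continuous g' := f.symm.continuous.iterate N
  have hl : Function.LeftInverse g' g :=
    Function.LeftInverse.iterate (g := f.symm) (f := f) f.symm_apply_apply N
  have hr : Function.LeftInverse g g' :=
    Function.LeftInverse.iterate (g := f) (f := f.symm) f.apply_symm_apply N
  have hfix : ∀ p ∈ R, g p = p := fun p hp =>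
    Function.isPeriodicPt_iff_minimalPeriod_dvd.2 (hdvd p hp)
  have hfix' : ∀ p ∈ R, g' p = p := fun p hp => by
    conv_lhs => rw [← hfix p hp, hl]
  have hiter : ∀ k x, g^[k] x = f^[N * k] x := fun k x => by rw [hgdef, ← Function.iterate_mul]
  have hconv : ∀ x, ∃ p ∈ R, Tendsto (fun k : ℕ => g^[k] x) atTop (𝓝 p) := by
    intro x
    refine conv_of_cluster hg hfin hfix _ (fun k => Function.iterate_succ_apply' g k x) ?_
    intro y hy
    refine cr_of_return f.continuous fun ε hε => ?_
    have hfr := hy.frequently (Metric.ball_mem_nhds y hε)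
    obtain ⟨k1, -, h1⟩ := frequently_atTop.1 hfr 0
    obtain ⟨k2, h12, h2⟩ := frequently_atTop.1 hfr (k1 + 2)
    refine ⟨g^[k1] x, N * (k2 - k1), ?_, h1, ?_⟩
    · nlinarith [show 2 ≤ k2 - k1 by omega]
    · rw [← hiter, ← Function.iterate_add_apply, show k2 - k1 + k1 = k2 by omega]
      exact h2
  have hconv' : ∀ x, ∃ p ∈ R, Tendsto (fun k : ℕ => g'^[k] x) atTop (𝓝 p) := by
    intro x
    refine conv_of_cluster hg' hfin hfix' _ (fun k => Function.iterate_succ_apply' g' k x) ?_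
    intro y hy
    refine cr_of_return f.continuous fun ε hε => ?_
    have hfr := hy.frequently (Metric.ball_mem_nhds y hε)
    obtain ⟨k1, -, h1⟩ := frequently_atTop.1 hfr 0
    obtain ⟨k2, h12, h2⟩ := frequently_atTop.1 hfr (k1 + 2)
    refine ⟨g'^[k2] x, N * (k2 - k1), ?_, h2, ?_⟩
    · nlinarith [show 2 ≤ k2 - k1 by omega]
    · rw [← hiter]
      conv_lhs => rw [show k2 = (k2 - k1) + k1 by omega, Function.iterate_add_apply,
        show k2 - k1 + k1 - k1 = k2 - k1 by omega, hr.iterate (k2 - k1)]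
      exact h1
  let lt : M → M → Prop := fun q p => Reach f p q ∧ ¬ Reach f q p
  have hlt : ∀ x, ¬ lt x x := fun x h => h.2 h.1
  have htr : ∀ x y z, lt x y → lt y z → lt x z := fun x y z h h' =>
    ⟨h'.1.trans h.1, fun h3 => h.2 (h3.trans h'.1)⟩
  have hreach1 : ∀ p x, Tendsto (fun k : ℕ => g^[k] x) atTop (𝓝 p) → Reach f x p := by
    intro p x hx ε hε
    obtain ⟨k, hk, hk1⟩ := ((hx.eventually (Metric.ball_mem_nhds p hε)).and
      (eventually_ge_atTop 1)).exists
    refine Relation.TransGen.single ⟨N * k, Nat.mul_pos hN hk1, ?_⟩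
    rw [← hiter]
    exact hk
  have hreach2 : ∀ p ∈ R, ∀ x, Tendsto (fun k : ℕ => g'^[k] x) atTop (𝓝 p) → Reach f p x := by
    intro p hp x hx ε hε
    obtain ⟨k, hk, hk1⟩ := ((hx.eventually (Metric.ball_mem_nhds p hε)).and
      (eventually_ge_atTop 1)).exists
    refine Relation.TransGen.head (b := g'^[k] x) ⟨N, hN, ?_⟩
      (Relation.TransGen.single ⟨N * k, Nat.mul_pos hN hk1, ?_⟩)
    · have : f^[N] p = p := hfix p hp
      rw [this, dist_comm]
      exact hk
    · rw [← hiter, hr.iterate k, dist_self]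
      exact hε
  have hac : ∀ p ∈ R, ∀ p' ∈ R, ∀ x, x ∉ R → Tendsto (fun k : ℕ => g'^[k] x) atTop (𝓝 p) →
      Tendsto (fun k : ℕ => g^[k] x) atTop (𝓝 p') → lt p' p := by
    intro p hp p' hp' x hx h1 h2
    have r1 := hreach2 p hp x h1
    have r2 := hreach1 p' x h2
    exact ⟨r1.trans r2, fun h3 => hx (cr_of_reach (r2.trans (h3.trans r1)))⟩
  have hmodel : ∀ p ∈ R, ∀ i, TopHyperbolic n f p i →
      HypModel (n := n) g p (fun j => (j : ℕ) < i) := fun p hp i H =>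
    hypModel_of_topHyperbolic hN (hdvd p hp) H
  have hfR : ∀ p ∈ R, f p ∈ R := by
    intro p hp
    refine cr_of_reach fun ε hε => Relation.TransGen.single ⟨N, hN, ?_⟩
    have h1 : f^[N] (f p) = f (f^[N] p) := by
      rw [← Function.iterate_succ_apply, Function.iterate_succ_apply']
    have h2 : f^[N] p = p := hfix p hp
    rw [h1, h2, dist_self]
    exact hε
  constructor
  · obtain ⟨ω, hω, ha, hu⟩ := core_unique (n := n) g g' hg hl R hfin hfix hconv lt hlt htr hac
      (by
        intro p hp
        obtain ⟨i, hi, H⟩ := hhyp p hp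
        refine ⟨_, hmodel p hp i H, ?_⟩
        rintro ⟨j, hj⟩
        have := (hind p hp i H).1
        exact ⟨⟨0, by omega⟩, ⟨1, by omega⟩, by simp, by simp; omega, by simp; omega⟩)
    refine ⟨ω, hω, ?_, ?_, ?_⟩
    · obtain ⟨i, hi, H⟩ := hhyp ω hω
      have := (model_attr_iff hl (hmodel ω hω i H)).1 ha ⟨0, by omega⟩
      have h0 : i = 0 := by simpa using this
      rwa [h0] at H
    · exact hu _ (hfR _ hω) (attr_map (Function.Commute.self_iterate f N) ha)
    · intro ω' hω' H
      exact hu _ hω' ((model_attr_iff hl (hmodel ω' hω' 0 H)).2 (by simp))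
  · have hcomm : Function.Commute f g' := by
      refine Function.Commute.iterate_right ?_ N
      intro x
      simp
    obtain ⟨α, hα, ha, hu⟩ := core_unique (n := n) g' g hg' hr R hfin hfix' hconv'
      (fun x y => lt y x) hlt (fun x y z h h' => htr _ _ _ h' h)
      (fun p hp p' hp' x hx h1 h2 => hac p' hp' p hp x hx h2 h1)
      (by
        intro p hp
        obtain ⟨i, hi, H⟩ := hhyp p hp
        refine ⟨_, (hmodel p hp i H).inv hl, ?_⟩
        rintro ⟨j, hj⟩
        have := (hind p hp i H).2
        have hj2 := j.2
        exact ⟨⟨n - 1, by omega⟩, ⟨n - 2, by omega⟩, by simp; omega, by simp; omega,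
          by simp; omega⟩)
    refine ⟨α, hα, ?_, ?_, ?_⟩
    · obtain ⟨i, hi, H⟩ := hhyp α hα
      have := (model_attr_iff hr ((hmodel α hα i H).inv hl)).1 ha ⟨n - 1, by omega⟩
      have h0 : i = n := by
        simp at this
        omega
      rwa [h0] at H
    · exact hu _ (hfR _ hα) (attr_map hcomm ha)
    · intro α' hα' H
      exact hu _ hα' ((model_attr_iff hr ((hmodel α' hα' n H).inv hl)).2 (by simp))
end

section
/- Let n ≥ 2, let M be a closed connected topological n-manifold, and let f : M → M be a regular homeomorphism such that no point of its chain recurrent set has Morse index 1 or n−1 and f has no heteroclinic intersections (W^u_p ∩ W^s_q = ∅ for every pair of distinct saddle periodic points p, q). Then M is homeomorphic to the n-sphere Sⁿ if and only if f has no saddle periodic points. -/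
open Filter Topology

section NoRetraction
open MeasureTheory Metric

/-- Euclidean space. -/
abbrev Eu (n : ℕ) := EuclideanSpace ℝ (Fin n)

/-- The determinant of `1 + t A` is a polynomial of degree at most `n` in `t`. -/
lemma det_one_add_smul_poly {n : ℕ} (A : Eu n →L[ℝ] Eu n) :
    ∃ P : Polynomial ℝ, P.natDegree ≤ n ∧ ∀ t : ℝ,
      (ContinuousLinearMap.id ℝ (Eu n) + t • A).det = P.eval t := by
  classical
  let b := (EuclideanSpace.basisFun (Fin n) ℝ).toBasis
  let N := LinearMap.toMatrix b b (A : Eu n →ₗ[ℝ] Eu n)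
  refine ⟨((Polynomial.X : Polynomial ℝ) • N.map (Polynomial.C : ℝ →+* Polynomial ℝ) +
    (1 : Matrix (Fin n) (Fin n) ℝ).map (Polynomial.C : ℝ →+* Polynomial ℝ)).det,
    ?_, ?_⟩
  · simpa using Polynomial.natDegree_det_X_add_C_le (n := Fin n) (α := ℝ) N 1
  · intro t
    have h1 : (ContinuousLinearMap.id ℝ (Eu n) + t • A).det = (1 + t • N).det := by
      rw [ContinuousLinearMap.det, ← LinearMap.det_toMatrix b]
      congr 1
      have : ((ContinuousLinearMap.id ℝ (Eu n) + t • A : Eu n →L[ℝ] Eu n) : Eu n →ₗ[ℝ] Eu n)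
        = LinearMap.id + t • (A : Eu n →ₗ[ℝ] Eu n) := rfl
      rw [this, map_add, map_smul, LinearMap.toMatrix_id]
    rw [h1, ← Polynomial.coe_evalRingHom, RingHom.map_det]
    congr 1
    ext i j
    by_cases hij : i = j <;>
    (simp [Matrix.map_apply, Matrix.add_apply, Matrix.smul_apply, hij, add_comm]; ring)

lemma det_pos_of_small {n : ℕ} (A : Eu n →L[ℝ] Eu n)
    (hA : ‖A‖ < 1) : 0 < (ContinuousLinearMap.id ℝ _ + A).det := by
  have hne : ∀ s ∈ Set.Icc (0:ℝ) 1, (ContinuousLinearMap.id ℝ _ + s • A).det ≠ 0 := by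
    intro s hs h0
    have hlt : ‖-(s • A)‖ < 1 := by
      rw [norm_neg, norm_smul, Real.norm_eq_abs, abs_of_nonneg hs.1]
      nlinarith [norm_nonneg A, hs.1, hs.2]
    have hu := isUnit_one_sub_of_norm_lt_one hlt
    rw [sub_neg_eq_add] at hu
    have hu' : IsUnit ((1 + s • A : Eu n →L[ℝ] Eu n) : Eu n →ₗ[ℝ] Eu n) := by
      obtain ⟨⟨a, b, h1, h2⟩, hab⟩ := hu
      refine ⟨⟨(a : Eu n →ₗ[ℝ] Eu n), (b : Eu n →ₗ[ℝ] Eu n), ?_, ?_⟩, ?_⟩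
      · ext1 x; exact congrArg (fun (q : Eu n →L[ℝ] Eu n) => q x) h1
      · ext1 x; exact congrArg (fun (q : Eu n →L[ℝ] Eu n) => q x) h2
      · exact congrArg (fun (q : Eu n →L[ℝ] Eu n) => (q : Eu n →ₗ[ℝ] Eu n)) hab
    have := (LinearMap.isUnit_iff_isUnit_det _).1 hu'
    exact this.ne_zero h0
  obtain ⟨P, -, hP⟩ := det_one_add_smul_poly A
  have h1 := hP 1
  rw [one_smul] at h1
  by_contra hcon
  have h0 : (ContinuousLinearMap.id ℝ _ + (0:ℝ) • A).det = 1 := by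
    have : ContinuousLinearMap.id ℝ _ + (0:ℝ) • A = ContinuousLinearMap.id ℝ (Eu n) := by
      ext x; simp
    rw [this]
    exact LinearMap.det_id
  have : (0:ℝ) ∈ Set.Icc (P.eval 1) (P.eval 0) := by
    rw [← h1, ← hP 0, h0]
    exact ⟨not_lt.1 hcon, zero_le_one⟩
  obtain ⟨s, hs, hs0⟩ := intermediate_value_Icc' (zero_le_one) (P.continuous.continuousOn) this
  exact hne s hs (by rw [hP]; exact hs0)

lemma no_C1_retract {n : ℕ} (hn : 1 ≤ n) (g : Eu n → Eu n)
    (hg : ContDiff ℝ 1 g) (hnorm : ∀ x, ‖g x‖ = 2) (hfix : ∀ x, ‖x‖ = 2 → g x = x) : False := by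
  have : Nonempty (Fin n) := ⟨⟨0, hn⟩⟩
  have : Nontrivial (Eu n) := inferInstance
  let k : (Eu n) → (Eu n) := fun x => g x - x
  have hk : ContDiff ℝ 1 k := hg.sub contDiff_id
  obtain ⟨L, hL⟩ := (hk.contDiffOn (s := closedBall (0:(Eu n)) 2)).exists_lipschitzOnWith
    (by norm_num) (convex_closedBall _ _) (isCompact_closedBall _ _)
  have hL' : ∀ x y : (Eu n), ‖x‖ ≤ 2 → ‖y‖ ≤ 2 → ‖k x - k y‖ ≤ L * ‖x - y‖ := by
    intro x y hx hy
    have := hL.dist_le_mul x (by simpa using hx) y (by simpa using hy)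
    simpa [dist_eq_norm] using this
  have hk0 : ∀ x, ‖x‖ = 2 → k x = 0 := fun x hx => by simp [k, hfix x hx]
  classical
  let K : (Eu n) → (Eu n) := fun x => if ‖x‖ ≤ 2 then k x else 0
  have hKmix : ∀ x y : (Eu n), ‖x‖ ≤ 2 → 2 < ‖y‖ → ‖k x‖ ≤ L * ‖x - y‖ := by
    intro x y hx hy
    have hc : Continuous fun s : ℝ => ‖x + s • (y - x)‖ := by fun_prop
    have : (2:ℝ) ∈ Set.Icc (‖x + (0:ℝ) • (y - x)‖) (‖x + (1:ℝ) • (y - x)‖) := by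
      simp; exact ⟨hx, hy.le⟩
    obtain ⟨s, hs, hs2⟩ := intermediate_value_Icc zero_le_one hc.continuousOn this
    have h1 := hL' x (x + s • (y - x)) hx hs2.le
    rw [hk0 _ hs2, sub_zero] at h1
    refine h1.trans (mul_le_mul_of_nonneg_left ?_ L.2)
    have : x - (x + s • (y - x)) = s • (x - y) := by module
    rw [this, norm_smul, Real.norm_eq_abs, abs_of_nonneg hs.1]
    nlinarith [norm_nonneg (x - y), hs.2]
  have hKL : ∀ x y : (Eu n), ‖K x - K y‖ ≤ L * ‖x - y‖ := by
    intro x y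
    by_cases hx : ‖x‖ ≤ 2 <;> by_cases hy : ‖y‖ ≤ 2
    · simp only [K, hx, hy, if_true]; exact hL' x y hx hy
    · simp only [K, hx, hy, if_true, if_false, sub_zero]; exact hKmix x y hx (not_le.1 hy)
    · simp only [K, hx, hy, if_true, if_false, zero_sub, norm_neg]
      rw [norm_sub_rev x y]; exact hKmix y x hy (not_le.1 hx)
    · simp only [K, hx, hy, if_false, sub_zero, norm_zero]; positivity
  let F : ℝ → (Eu n) → (Eu n) := fun t x => x + t • K x
  let D : (Eu n) → (Eu n) →L[ℝ] (Eu n) := fun x => fderiv ℝ k x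
  have hD : ∀ x ∈ ball (0:(Eu n)) 2, ‖D x‖ ≤ L := by
    intro x hx
    exact norm_fderiv_le_of_lipschitzOn ℝ (mem_of_superset (isOpen_ball.mem_nhds hx) ball_subset_closedBall) hL
  set V : ℝ := (volume.real (ball (0:(Eu n)) 2)) with hV
  have hVpos : 0 < V := by
    rw [hV, Measure.real]
    exact ENNReal.toReal_pos (measure_ball_pos _ _ (by norm_num)).ne' measure_ball_lt_top.ne
  -- small `t`
  have hsmall : ∀ t : ℝ, 0 < t → t * (L + 1) ≤ 1 / 2 →
      ∫ x in ball (0:(Eu n)) 2, (ContinuousLinearMap.id ℝ (Eu n) + t • D x).det = V := by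
    intro t ht htL
    have htL1 : t * L < 1 := by nlinarith
    have happ : ApproximatesLinearOn (F t) ((ContinuousLinearEquiv.refl ℝ (Eu n) : (Eu n) ≃L[ℝ] (Eu n)) : (Eu n) →L[ℝ] (Eu n))
        Set.univ (⟨t * L, by positivity⟩ : NNReal) := by
      intro x _ y _
      have : F t x - F t y - ((ContinuousLinearEquiv.refl ℝ (Eu n) : (Eu n) ≃L[ℝ] (Eu n)) : (Eu n) →L[ℝ] (Eu n)) (x - y)
          = t • (K x - K y) := by
        simp [F]; module
      rw [this, norm_smul, Real.norm_eq_abs, abs_of_pos ht]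
      have := hKL x y
      calc t * ‖K x - K y‖ ≤ t * (L * ‖x - y‖) := by gcongr
        _ = _ := by rw [← mul_assoc]; rfl
    have hc : Subsingleton (Eu n) ∨ (⟨t * L, by positivity⟩ : NNReal) <
        ‖(((ContinuousLinearEquiv.refl ℝ (Eu n)).symm : (Eu n) ≃L[ℝ] (Eu n)) : (Eu n) →L[ℝ] (Eu n))‖₊⁻¹ := by
      right
      have : ‖(((ContinuousLinearEquiv.refl ℝ (Eu n)).symm : (Eu n) ≃L[ℝ] (Eu n)) : (Eu n) →L[ℝ] (Eu n))‖₊ = 1 := by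
        have : ‖ContinuousLinearMap.id ℝ (Eu n)‖ = 1 := ContinuousLinearMap.norm_id
        exact NNReal.eq this
      rw [this, inv_one]
      exact htL1
    have hsurj := happ.surjective hc
    have hinj : Function.Injective (F t) := by
      have := happ.injective hc
      intro a b hab
      have := @this ⟨a, trivial⟩ ⟨b, trivial⟩ hab
      exact congrArg Subtype.val this
    have hout : ∀ x, 2 ≤ ‖x‖ → F t x = x := by
      intro x hx
      rcases hx.eq_or_lt with h | h
      · simp [F, K, h.symm, hk0 x h.symm]
      · simp [F, K, not_le.2 h]
    have himg : F t '' ball (0:(Eu n)) 2 = ball (0:(Eu n)) 2 := by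
      ext y
      constructor
      · rintro ⟨x, hx, rfl⟩
        by_contra hcon
        have h2 : 2 ≤ ‖F t x‖ := by simpa using hcon
        have := hinj (hout _ h2)
        rw [this] at h2
        have : ‖x‖ < 2 := by simpa using hx
        linarith
      · intro hy
        obtain ⟨x, rfl⟩ := hsurj y
        refine ⟨x, ?_, rfl⟩
        by_contra hcon
        have h2 : 2 ≤ ‖x‖ := by simpa using hcon
        rw [hout x h2] at hy
        exact hcon hy
    have hder : ∀ x ∈ ball (0:(Eu n)) 2, HasFDerivWithinAt (F t) (ContinuousLinearMap.id ℝ (Eu n) + t • D x) (ball 0 2) x := by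
      intro x hx
      have h1 : HasFDerivAt k (D x) x := (hk.differentiable (by norm_num) x).hasFDerivAt
      have h2 : HasFDerivAt (fun y => y + t • k y) (ContinuousLinearMap.id ℝ (Eu n) + t • D x) x :=
        (hasFDerivAt_id x).add (h1.const_smul t)
      refine h2.hasFDerivWithinAt.congr ?_ ?_
      · intro y hy
        have : ‖y‖ ≤ 2 := by have := mem_ball_zero_iff.1 hy; linarith
        simp [F, K, this]
      · have : ‖x‖ ≤ 2 := by have := mem_ball_zero_iff.1 hx; linarith
        simp [F, K, this]
    have hIntg := integral_image_eq_integral_abs_det_fderiv_smul volume measurableSet_ball hder hinj.injOn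
      (fun _ => (1:ℝ))
    rw [himg] at hIntg
    have hL2 : ∫ x in ball (0:(Eu n)) 2, (1:ℝ) = V := by simp [hV]
    rw [hL2] at hIntg
    rw [hIntg]
    refine setIntegral_congr_fun measurableSet_ball ?_
    intro x hx
    have hp : 0 < (ContinuousLinearMap.id ℝ (Eu n) + t • D x).det := by
      apply det_pos_of_small
      rw [norm_smul, Real.norm_eq_abs, abs_of_pos ht]
      have := hD x hx
      calc t * ‖D x‖ ≤ t * L := by gcongr
        _ < 1 := htL1
    simp [abs_of_pos hp]
  -- t = 1
  have hone : ∀ x, (ContinuousLinearMap.id ℝ (Eu n) + (1:ℝ) • D x).det = 0 := by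
    intro x
    have hgd : HasFDerivAt g (fderiv ℝ g x) x := (hg.differentiable (by norm_num) x).hasFDerivAt
    have hDx : ContinuousLinearMap.id ℝ (Eu n) + (1:ℝ) • D x = fderiv ℝ g x := by
      have : D x = fderiv ℝ g x - ContinuousLinearMap.id ℝ (Eu n) := (hgd.sub (hasFDerivAt_id x)).fderiv
      rw [this, one_smul]; abel
    rw [hDx]
    by_contra hne
    have hu : IsUnit (LinearMap.det ((fderiv ℝ g x : (Eu n) →L[ℝ] (Eu n)) : (Eu n) →ₗ[ℝ] (Eu n))) := isUnit_iff_ne_zero.2 hne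
    have hu2 := (LinearMap.isUnit_iff_isUnit_det _).2 hu
    have hsurj := (Module.End.isUnit_iff _).1 hu2 |>.2
    obtain ⟨v, hv⟩ := hsurj (g x)
    have hsq : HasFDerivAt (fun y => ‖g y‖ ^ 2) (2 • (innerSL ℝ (g x)).comp (fderiv ℝ g x)) x := hgd.norm_sq
    have hconst : (fun y => ‖g y‖ ^ 2) = fun _ => (4:ℝ) := by
      ext y; rw [hnorm]; norm_num
    rw [hconst] at hsq
    have h0 := hsq.unique (hasFDerivAt_const (4:ℝ) x)
    have h1 := congrArg (fun q : (Eu n) →L[ℝ] ℝ => q v) h0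
    have hv' : (fderiv ℝ g x) v = g x := hv
    simp [hv', hnorm] at h1
  -- interpolation
  let t0 : ℝ := 1 / (2 * (L + 1))
  have hL1 : (0:ℝ) < L + 1 := by positivity
  have ht0 : 0 < t0 := by positivity
  let v : ℕ → ℝ := fun j => t0 / (j + 1)
  have hv : Set.InjOn v (Finset.range (n + 1)) := by
    intro a _ b _ hab
    have hab' : t0 / ((a:ℝ) + 1) = t0 / ((b:ℝ) + 1) := hab
    have ha : (0:ℝ) < a + 1 := by positivity
    have hb : (0:ℝ) < b + 1 := by positivity
    rw [div_eq_div_iff ha.ne' hb.ne'] at hab'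
    have := mul_left_cancel₀ ht0.ne' hab'
    have : (a:ℝ) = b := by linarith
    exact_mod_cast this
  let w : ℕ → ℝ := fun j => (Lagrange.basis (Finset.range (n+1)) v j).eval 1
  have hw : ∑ j ∈ Finset.range (n+1), w j = 1 := by
    have := congrArg (Polynomial.eval (1:ℝ)) (Lagrange.sum_basis hv ⟨0, by simp⟩)
    rwa [Polynomial.eval_finsetSum, Polynomial.eval_one] at this
  have hpt : ∀ x, (0:ℝ) = ∑ j ∈ Finset.range (n+1), w j * (ContinuousLinearMap.id ℝ (Eu n) + (v j) • D x).det := by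
    intro x
    obtain ⟨P, hPd, hP⟩ := det_one_add_smul_poly (D x)
    have h1 := hone x
    rw [hP] at h1
    have hd : P.degree < ((Finset.range (n+1)).card : WithBot ℕ) := by
      refine lt_of_le_of_lt Polynomial.degree_le_natDegree ?_
      rw [Finset.card_range]
      exact_mod_cast Nat.lt_succ_of_le hPd
    have h2 := congrArg (Polynomial.eval (1:ℝ)) (Lagrange.eq_interpolate hv hd)
    rw [h1, Lagrange.interpolate_apply, Polynomial.eval_finsetSum] at h2
    rw [h2]
    refine Finset.sum_congr rfl fun j _ => ?_
    rw [hP, Polynomial.eval_mul, Polynomial.eval_C, mul_comm]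
  have hvs : ∀ j, 0 < v j ∧ v j * (L + 1) ≤ 1 / 2 := by
    intro j
    refine ⟨by positivity, ?_⟩
    have h1 : v j ≤ t0 := div_le_self ht0.le (by linarith [(Nat.cast_nonneg j : (0:ℝ) ≤ j)])
    have h2 : t0 * (L + 1) = 1 / 2 := by simp only [t0]; field_simp
    nlinarith
  have hcontD : Continuous D := hk.continuous_fderiv (by norm_num)
  have hInt : ∀ j, IntegrableOn (fun x => (ContinuousLinearMap.id ℝ (Eu n) + (v j) • D x).det) (ball (0:(Eu n)) 2) := by
    intro j
    have hc : Continuous (fun x => (ContinuousLinearMap.id ℝ (Eu n) + (v j) • D x).det) :=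
      ContinuousLinearMap.continuous_det.comp (by fun_prop)
    exact (hc.continuousOn.integrableOn_compact (isCompact_closedBall (0:(Eu n)) 2)).mono_set ball_subset_closedBall
  have : (0:ℝ) = V := by
    calc (0:ℝ) = ∫ x in ball (0:(Eu n)) 2, (0:ℝ) := by simp
      _ = ∫ x in ball (0:(Eu n)) 2, ∑ j ∈ Finset.range (n+1), w j * (ContinuousLinearMap.id ℝ (Eu n) + (v j) • D x).det := by
        refine setIntegral_congr_fun measurableSet_ball fun x _ => hpt x
      _ = ∑ j ∈ Finset.range (n+1), w j * V := by
        rw [integral_finsetSum _ (fun j _ => (hInt j).const_mul (w j))]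
        refine Finset.sum_congr rfl fun j _ => ?_
        rw [integral_const_mul, hsmall _ (hvs j).1 (hvs j).2]
      _ = V := by rw [← Finset.sum_mul, hw, one_mul]
  linarith

/-- No continuous nowhere vanishing map of `ℝⁿ` is the identity outside the unit ball. -/
theorem no_nonvanishing {n : ℕ} (hn : 1 ≤ n) (F : Eu n → Eu n)
    (hF : Continuous F) (h0 : ∀ x, F x ≠ 0) (hid : ∀ x, 1 ≤ ‖x‖ → F x = x) : False := by
  let K : (Eu n) → (Eu n) := fun x => F x - x
  have hK : Continuous K := hF.sub continuous_id
  have hKout : ∀ x, 1 ≤ ‖x‖ → K x = 0 := fun x hx => by simp [K, hid x hx]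
  have hKc : HasCompactSupport K := by
    refine HasCompactSupport.intro (isCompact_closedBall (0:(Eu n)) 1) fun x hx => hKout x ?_
    have : 1 < ‖x‖ := by simpa using hx
    exact this.le
  obtain ⟨δ, hδ, hδF⟩ : ∃ δ > 0, ∀ x, δ ≤ ‖F x‖ := by
    obtain ⟨x0, -, hx0⟩ := (isCompact_closedBall (0:(Eu n)) 1).exists_isMinOn ⟨0, by simp⟩
      (hF.norm.continuousOn)
    refine ⟨min 1 ‖F x0‖, lt_min one_pos (norm_pos_iff.2 (h0 x0)), fun x => ?_⟩
    rcases le_total ‖x‖ 1 with h | h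
    · exact (min_le_right _ _).trans (hx0 (by simpa using h))
    · rw [hid x h]; exact (min_le_left _ _).trans h
  obtain ⟨η, hη, hηK⟩ := Metric.uniformContinuous_iff.1 (hKc.uniformContinuous_of_continuous hK) (δ/2) (by positivity)
  let r := min η 1
  have hr : 0 < r := lt_min hη one_pos
  let φ : ContDiffBump (0:(Eu n)) := ⟨r/2, r, by positivity, by linarith⟩
  let K' : (Eu n) → (Eu n) := convolution (φ.normed volume) K (ContinuousLinearMap.lsmul ℝ ℝ) volume
  have hK's : ContDiff ℝ 1 K' := by
    have := HasCompactSupport.contDiff_convolution_left (n := 1) (ContinuousLinearMap.lsmul ℝ ℝ)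
      (φ.hasCompactSupport_normed (μ := volume)) (φ.contDiff_normed) (hK.locallyIntegrable (μ := volume))
    exact_mod_cast this
  have hK'd : ∀ x, ‖K' x - K x‖ ≤ δ/2 := by
    intro x
    rw [← dist_eq_norm]
    refine φ.dist_normed_convolution_le hK.aestronglyMeasurable fun y hy => ?_
    exact (hηK (lt_of_lt_of_le hy (min_le_left _ _))).le
  have hK'0 : ∀ x, 2 ≤ ‖x‖ → K' x = 0 := by
    intro x hx
    have hKx : K x = 0 := hKout x (by linarith)
    have : dist (K' x) (K x) ≤ 0 := by
      refine φ.dist_normed_convolution_le hK.aestronglyMeasurable fun y hy => ?_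
      have h1 : dist y x < 1 := lt_of_lt_of_le hy (min_le_right _ _)
      have h2 : 1 ≤ ‖y‖ := by
        have := norm_sub_norm_le x y
        rw [dist_eq_norm, norm_sub_rev] at h1
        linarith
      rw [hKout y h2, hKx, dist_self]
    rw [hKx] at this
    exact dist_le_zero.1 this
  let F' : (Eu n) → (Eu n) := fun x => x + K' x
  have hF's : ContDiff ℝ 1 F' := contDiff_id.add hK's
  have hF'0 : ∀ x, F' x ≠ 0 := by
    intro x hx
    have h1 := hK'd x
    have h2 : K' x - K x = F' x - F x := by simp only [F', K]; abel
    rw [h2, hx, zero_sub, norm_neg] at h1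
    have := hδF x
    linarith
  have hpos : ∀ x, 0 < ‖F' x‖ := fun x => norm_pos_iff.2 (hF'0 x)
  refine no_C1_retract hn (fun x => (2 * ‖F' x‖⁻¹) • F' x) ?_ ?_ ?_
  · exact (contDiff_const.mul ((hF's.norm ℝ hF'0).inv fun x => (hpos x).ne')).smul hF's
  · intro x
    rw [norm_smul, norm_mul, norm_inv, norm_norm, mul_assoc, inv_mul_cancel₀ (hpos x).ne']
    norm_num
  · intro x hx
    have : F' x = x := by simp [F', hK'0 x hx.ge]
    rw [this, hx]
    norm_num
end NoRetraction


section Homot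
open Metric

/-- The unit sphere. -/
abbrev Sph (n : ℕ) := sphere (0 : Eu n) 1
/-- Punctured Euclidean space. -/
abbrev Pun (n : ℕ) := {x : Eu n // x ≠ 0}

/-- Homotopy of maps from the unit sphere to punctured Euclidean space. -/
def HNZ {n : ℕ} (a b : Sph n → Eu n) : Prop :=
  ∃ A B : C(Sph n, Pun n), (∀ z, (A z : Eu n) = a z) ∧ (∀ z, (B z : Eu n) = b z) ∧ A.Homotopic B

lemma HNZ.symm {n : ℕ} {a b : Sph n → Eu n} (h : HNZ a b) : HNZ b a := by
  obtain ⟨A, B, hA, hB, h⟩ := h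
  exact ⟨B, A, hB, hA, h.symm⟩

lemma HNZ.trans {n : ℕ} {a b c : Sph n → Eu n} (h : HNZ a b) (h' : HNZ b c) : HNZ a c := by
  obtain ⟨A, B, hA, hB, h⟩ := h
  obtain ⟨B', C, hB', hC, h'⟩ := h'
  have : B = B' := by
    ext1 z; apply Subtype.ext; rw [hB, hB']
  subst this
  exact ⟨A, C, hA, hC, h.trans h'⟩

lemma HNZ.precomp {n : ℕ} {a b : Sph n → Eu n} (h : HNZ a b) (τ : C(Sph n, Sph n)) :
    HNZ (fun z => a (τ z)) (fun z => b (τ z)) := by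
  obtain ⟨A, B, hA, hB, h⟩ := h
  exact ⟨A.comp τ, B.comp τ, fun z => hA _, fun z => hB _, h.comp (ContinuousMap.Homotopic.refl τ)⟩

lemma HNZ.mk {n : ℕ} (H : ℝ → Sph n → Eu n)
    (hc : ContinuousOn (fun p : ℝ × Sph n => H p.1 p.2) (Set.Icc 0 1 ×ˢ Set.univ))
    (h0 : ∀ t ∈ Set.Icc (0:ℝ) 1, ∀ z, H t z ≠ 0) : HNZ (H 0) (H 1) := by
  have hc' : Continuous (fun p : unitInterval × Sph n => H p.1 p.2) := by
    have h1 : Continuous (fun p : unitInterval × Sph n => ((p.1 : ℝ), p.2)) := by fun_prop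
    exact hc.comp_continuous h1 (fun p => ⟨p.1.2, trivial⟩)
  have hz : ∀ p : unitInterval × Sph n, H p.1 p.2 ≠ 0 := fun p => h0 _ p.1.2 _
  let G : C(unitInterval × Sph n, Pun n) := ⟨fun p => ⟨H p.1 p.2, hz p⟩, hc'.subtype_mk _⟩
  refine ⟨G.comp ⟨fun z => (0, z), by fun_prop⟩, G.comp ⟨fun z => (1, z), by fun_prop⟩, fun z => ?_, fun z => ?_, ⟨⟨G, fun z => rfl, fun z => rfl⟩⟩⟩
  · simp [G]
  · simp [G]

lemma HNZ.not_null {n : ℕ} (hn : 1 ≤ n) (c : Eu n) : ¬ HNZ (fun z : Sph n => (z : Eu n)) (fun _ => c) := by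
  intro h
  obtain ⟨A, B, hA, hB, ⟨H⟩⟩ := h.symm
  have : Nonempty (Fin n) := ⟨⟨0, hn⟩⟩
  obtain ⟨z0, hz0⟩ := NormedSpace.sphere_nonempty (x := (0 : Eu n)) (r := 1).2 zero_le_one
  classical
  let N : Eu n → Sph n := fun x => if h : x = 0 then ⟨z0, hz0⟩ else ⟨‖x‖⁻¹ • x, by simp [norm_smul, h]⟩
  have hN : ∀ x : Eu n, x ≠ 0 → (N x : Eu n) = ‖x‖⁻¹ • x := fun x hx => by simp [N, hx]
  have hNc : ∀ x : Eu n, x ≠ 0 → ContinuousAt N x := by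
    intro x hx
    rw [Topology.IsInducing.subtypeVal.continuousAt_iff]
    have h1 : ContinuousAt (fun x : Eu n => ‖x‖⁻¹ • x) x :=
      (continuousAt_id.norm.inv₀ (by simpa using hx)).smul continuousAt_id
    refine h1.congr ?_
    filter_upwards [isOpen_ne.mem_nhds hx] with y hy
    exact (hN y hy).symm
  let F : Eu n → Eu n := fun x => (max 1 ‖x‖) • ((H (Set.projIcc 0 1 zero_le_one (2 * ‖x‖ - 1), N x) : Pun n) : Eu n)
  have hsm : ∀ x : Eu n, ‖x‖ ≤ 1/2 → F x = c := by
    intro x hx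
    have : Set.projIcc (0:ℝ) 1 zero_le_one (2 * ‖x‖ - 1) = 0 := Set.projIcc_of_le_left _ (by linarith)
    simp only [F, this]
    rw [H.apply_zero, hA, max_eq_left (by linarith), one_smul]
  refine no_nonvanishing hn F ?_ ?_ ?_
  · rw [continuous_iff_continuousAt]
    intro x
    by_cases hx : x = 0
    · subst hx
      refine (continuousAt_const (y := c)).congr ?_
      filter_upwards [ball_mem_nhds (0 : Eu n) (show (0:ℝ) < 1/2 by norm_num)] with y hy
      exact (hsm y (by simpa using (mem_ball_zero_iff.1 hy).le)).symm
    · have h1 : ContinuousAt (fun x : Eu n => (Set.projIcc (0:ℝ) 1 zero_le_one (2 * ‖x‖ - 1), N x)) x := by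
        refine ContinuousAt.prodMk ?_ (hNc x hx)
        have : Continuous (fun x : Eu n => Set.projIcc (0:ℝ) 1 zero_le_one (2 * ‖x‖ - 1)) :=
          continuous_projIcc.comp (by fun_prop)
        exact this.continuousAt
      have h2 : ContinuousAt (fun x : Eu n => ((H (Set.projIcc 0 1 zero_le_one (2 * ‖x‖ - 1), N x) : Pun n) : Eu n)) x :=
        (continuous_subtype_val.comp H.continuous).continuousAt.comp h1
      have h3 : Continuous (fun x : Eu n => max 1 ‖x‖) := by fun_prop
      exact h3.continuousAt.smul h2
  · intro x
    refine smul_ne_zero ?_ (H _).2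
    have : (1:ℝ) ≤ max 1 ‖x‖ := le_max_left _ _
    linarith
  · intro x hx
    have h0 : x ≠ 0 := by rintro rfl; norm_num at hx
    have : Set.projIcc (0:ℝ) 1 zero_le_one (2 * ‖x‖ - 1) = 1 := Set.projIcc_of_right_le _ (by linarith)
    simp only [F, this]
    rw [H.apply_one, hB]
    show max 1 ‖x‖ • (N x : Eu n) = x
    rw [hN x h0, max_eq_right hx, smul_smul, mul_inv_cancel₀ (by simpa using h0), one_smul]

lemma norm_sph {n : ℕ} (z : Sph n) : ‖(z : Eu n)‖ = 1 := by simpa using z.2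

lemma sph_ne {n : ℕ} (z : Sph n) : (z : Eu n) ≠ 0 := by
  intro h; have := norm_sph z; rw [h] at this; simp at this

lemma local_not_null {n : ℕ} (hn : 1 ≤ n) (Φ : OpenPartialHomeomorph (Eu n) (Eu n))
    (h0 : (0 : Eu n) ∈ Φ.source) (hΦ0 : Φ 0 = 0) :
    ∃ ε0 > (0:ℝ), ∀ ε : ℝ, 0 < ε → ε ≤ ε0 → ∀ c, ¬ HNZ (fun z : Sph n => Φ (ε • (z : Eu n))) (fun _ => c) := by
  have ht0 : (0 : Eu n) ∈ Φ.target := by have := Φ.map_source h0; rwa [hΦ0] at this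
  obtain ⟨δ, hδ, hδt⟩ := Metric.isOpen_iff.1 Φ.open_target 0 ht0
  have hpre : Φ.source ∩ Φ ⁻¹' ball 0 δ ∈ 𝓝 (0 : Eu n) := by
    refine inter_mem (Φ.open_source.mem_nhds h0) ((Φ.continuousAt h0).preimage_mem_nhds ?_)
    rw [hΦ0]; exact ball_mem_nhds _ hδ
  obtain ⟨ε1, hε1, hε1s⟩ := Metric.mem_nhds_iff.1 hpre
  refine ⟨ε1/2, by positivity, fun ε hε hεle c h => ?_⟩
  have hmem : ∀ z : Sph n, ε • (z : Eu n) ∈ Φ.source ∧ Φ (ε • (z : Eu n)) ∈ ball (0 : Eu n) δ := by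
    intro z
    apply hε1s
    rw [mem_ball_zero_iff, norm_smul, norm_sph, mul_one, Real.norm_eq_abs, abs_of_pos hε]
    linarith
  have hsymm0 : ∀ w ∈ Φ.target, w ≠ 0 → Φ.symm w ≠ 0 := by
    intro w hw hw0 h
    apply hw0
    rw [← Φ.right_inv hw, h, hΦ0]
  have hΦne : ∀ z : Sph n, Φ (ε • (z : Eu n)) ≠ 0 := by
    intro z hz
    have := Φ.injOn (hmem z).1 h0 (hz.trans hΦ0.symm)
    exact smul_ne_zero hε.ne' (sph_ne z) this
  obtain ⟨A, B, hA, hB, ⟨H⟩⟩ := h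
  obtain ⟨C, hC⟩ : ∃ C : ℝ, ∀ p, ‖((H p : Pun n) : Eu n)‖ ≤ C := by
    obtain ⟨C, hC⟩ := (isCompact_range (continuous_subtype_val.comp H.continuous)).isBounded.exists_norm_le
    exact ⟨C, fun p => hC _ ⟨p, rfl⟩⟩
  set C' := max C δ with hC'
  have hC'pos : 0 < C' := lt_max_of_lt_right hδ
  set s : ℝ := δ / (2 * C') with hs
  have hspos : 0 < s := by positivity
  have hs1 : s ≤ 1 := by
    rw [hs, div_le_one (by positivity)]
    have : δ ≤ C' := le_max_right _ _
    linarith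
  have hsC : s * C' < δ := by
    rw [hs]; field_simp; norm_num
  have K0 : HNZ (fun z : Sph n => (z : Eu n)) (fun z => ε • (z : Eu n)) := by
    have := HNZ.mk (n := n) (fun t z => ((1 - t) + t * ε) • (z : Eu n)) (by fun_prop) (by
      intro t ht z
      refine smul_ne_zero (ne_of_gt ?_) (sph_ne z)
      rcases eq_or_lt_of_le ht.1 with h | h
      · rw [← h]; norm_num
      · have := ht.2; have := mul_pos h hε; linarith)
    simpa using this
  have K1 : HNZ (fun z : Sph n => ε • (z : Eu n)) (fun z => Φ.symm (s • Φ (ε • (z : Eu n)))) := by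
    have hin : ∀ t ∈ Set.Icc (0:ℝ) 1, ∀ z : Sph n, ((1 - t) + t * s) • Φ (ε • (z : Eu n)) ∈ Φ.target ∧
        ((1 - t) + t * s) • Φ (ε • (z : Eu n)) ≠ 0 := by
      intro t ht z
      have hp : 0 < (1 - t) + t * s := by
        rcases eq_or_lt_of_le ht.1 with h | h
        · rw [← h]; norm_num
        · have := ht.2; have := mul_pos h hspos; linarith
      have hle : (1 - t) + t * s ≤ 1 := by nlinarith [ht.1]
      refine ⟨hδt ?_, smul_ne_zero hp.ne' (hΦne z)⟩
      rw [mem_ball_zero_iff, norm_smul, Real.norm_eq_abs, abs_of_pos hp]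
      have := mem_ball_zero_iff.1 (hmem z).2
      nlinarith [norm_nonneg (Φ (ε • (z : Eu n)))]
    have := HNZ.mk (n := n) (fun t z => Φ.symm (((1 - t) + t * s) • Φ (ε • (z : Eu n)))) (by
      have h1 : Continuous (fun z : Sph n => Φ (ε • (z : Eu n))) :=
        Φ.continuousOn.comp_continuous (by fun_prop) (fun z => (hmem z).1)
      have h2 : Continuous (fun p : ℝ × Sph n => ((1 - p.1) + p.1 * s) • Φ (ε • (p.2 : Eu n))) :=
        (by fun_prop : Continuous (fun p : ℝ × Sph n => ((1 - p.1) + p.1 * s))).smul (h1.comp continuous_snd)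
      exact Φ.continuousOn_symm.comp h2.continuousOn (fun p hp => (hin p.1 hp.1 p.2).1)) (by
      intro t ht z
      exact hsymm0 _ (hin t ht z).1 (hin t ht z).2)
    simp only [sub_zero, zero_mul, add_zero, one_smul, sub_self, one_mul, zero_add] at this
    convert this using 2 with z
    rw [Φ.left_inv (hmem z).1]
  have K2 : HNZ (fun z : Sph n => Φ.symm (s • Φ (ε • (z : Eu n)))) (fun _ => Φ.symm (s • c)) := by
    have hin : ∀ p, s • ((H p : Pun n) : Eu n) ∈ Φ.target := by
      intro p
      apply hδt
      rw [mem_ball_zero_iff, norm_smul, Real.norm_eq_abs, abs_of_pos hspos]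
      have : ‖((H p : Pun n) : Eu n)‖ ≤ C' := (hC p).trans (le_max_left _ _)
      nlinarith
    have := HNZ.mk (n := n) (fun t z => Φ.symm (s • ((H (Set.projIcc 0 1 zero_le_one t, z) : Pun n) : Eu n))) (by
      have h2 : Continuous (fun p : ℝ × Sph n => s • ((H (Set.projIcc 0 1 zero_le_one p.1, p.2) : Pun n) : Eu n)) := by
        refine Continuous.const_smul ?_ s
        refine continuous_subtype_val.comp (H.continuous.comp ?_)
        exact (continuous_projIcc.comp continuous_fst).prodMk continuous_snd
      exact Φ.continuousOn_symm.comp h2.continuousOn (fun p _ => hin _)) (by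
      intro t ht z
      exact hsymm0 _ (hin _) (smul_ne_zero hspos.ne' (H _).2))
    convert this using 2 with z z
    · rw [Set.projIcc_left]
      erw [H.apply_zero]; rw [hA]
    · rw [Set.projIcc_right]
      erw [H.apply_one]; rw [hB]
  exact HNZ.not_null hn _ ((K0.trans K1).trans K2)

lemma local_diff_not_null {n : ℕ} (hn : 1 ≤ n) (Φ : OpenPartialHomeomorph (Eu n) (Eu n))
    (h0 : (0 : Eu n) ∈ Φ.source) (hΦ0 : Φ 0 = 0) (P Q : Eu n →L[ℝ] Eu n)
    (hPQ : ∀ z, P z + Q z = z) (hPP : ∀ z, P (P z) = P z) (hQQ : ∀ z, Q (Q z) = Q z)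
    (hPle : ∀ z, ‖P z‖ ≤ ‖z‖) (hQle : ∀ z, ‖Q z‖ ≤ ‖z‖) (hT : ∀ z, ‖P z - Q z‖ = ‖z‖) :
    ∃ ε0 > (0:ℝ), ∀ ε : ℝ, 0 < ε → ε ≤ ε0 → ∀ c,
      ¬ HNZ (fun z : Sph n => Φ (ε • P z) - Φ (ε • Q z)) (fun _ => c) := by
  have hPQ0 : ∀ z, P (Q z) = 0 := by
    intro z
    have h1 := hPQ (Q z)
    rw [hQQ] at h1
    simpa using h1
  have hQP0 : ∀ z, Q (P z) = 0 := by
    intro z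
    have h1 := hPQ (P z)
    rw [hPP] at h1
    simpa using h1
  obtain ⟨ε1, hε1, hl⟩ := local_not_null hn Φ h0 hΦ0
  obtain ⟨ε2, hε2, hs⟩ := Metric.isOpen_iff.1 Φ.open_source 0 h0
  refine ⟨min ε1 (ε2/3), by positivity, fun ε hε hle c h => ?_⟩
  have hle1 : ε ≤ ε1 := hle.trans (min_le_left _ _)
  have hle2 : ε ≤ ε2/3 := hle.trans (min_le_right _ _)
  have hP1 : ∀ z : Sph n, ‖P z‖ ≤ 1 := fun z => (hPle z).trans (norm_sph z).le
  have hQ1 : ∀ z : Sph n, ‖Q z‖ ≤ 1 := fun z => (hQle z).trans (norm_sph z).le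
  have hm1 : ∀ t ∈ Set.Icc (0:ℝ) 1, ∀ z : Sph n, ε • (P z - t • Q z) ∈ Φ.source := by
    intro t ht z
    apply hs
    rw [mem_ball_zero_iff, norm_smul, Real.norm_eq_abs, abs_of_pos hε]
    have h1 := norm_sub_le (P (z : Eu n)) (t • Q (z : Eu n))
    rw [norm_smul, Real.norm_eq_abs, abs_of_nonneg ht.1] at h1
    have : t * ‖Q (z : Eu n)‖ ≤ 1 := by nlinarith [hQ1 z, ht.1, ht.2, norm_nonneg (Q (z : Eu n))]
    have h3 : ‖P (z : Eu n) - t • Q (z : Eu n)‖ ≤ 2 := by linarith [hP1 z]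
    nlinarith
  have hm2 : ∀ t ∈ Set.Icc (0:ℝ) 1, ∀ z : Sph n, ε • ((1 - t) • Q z) ∈ Φ.source := by
    intro t ht z
    apply hs
    rw [mem_ball_zero_iff, norm_smul, Real.norm_eq_abs, abs_of_pos hε, norm_smul, Real.norm_eq_abs, abs_of_nonneg (by linarith [ht.2])]
    have : (1 - t) * ‖Q (z : Eu n)‖ ≤ 1 := by nlinarith [hQ1 z, ht.1, ht.2, norm_nonneg (Q (z : Eu n))]
    nlinarith
  have K := HNZ.mk (n := n) (fun t z => Φ (ε • (P z - t • Q z)) - Φ (ε • ((1 - t) • Q z))) (by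
    refine ContinuousOn.sub ?_ ?_
    · exact Φ.continuousOn.comp (by fun_prop) (fun p hp => hm1 p.1 hp.1 p.2)
    · exact Φ.continuousOn.comp (by fun_prop) (fun p hp => hm2 p.1 hp.1 p.2)) (by
    intro t ht z hz
    have h1 := Φ.injOn (hm1 t ht z) (hm2 t ht z) (sub_eq_zero.1 hz)
    have h2 := smul_right_injective _ hε.ne' h1
    have h2 : P (z : Eu n) - t • Q (z : Eu n) = (1 - t) • Q (z : Eu n) := h2
    have h3 : P (z : Eu n) = Q (z : Eu n) := by
      have : P (z : Eu n) - Q (z : Eu n) = (P (z : Eu n) - t • Q (z : Eu n)) - (1 - t) • Q (z : Eu n) := by module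
      rw [h2, sub_self] at this
      exact sub_eq_zero.1 this
    have h4 := hPP z
    rw [h3, hPQ0] at h4
    have h5 := hPQ z
    rw [h3, ← h4, add_zero] at h5
    exact sph_ne z h5.symm)
  simp only [sub_zero, zero_smul, one_smul, sub_self, smul_zero, hΦ0] at K
  let τ : C(Sph n, Sph n) := ⟨fun z => ⟨P z - Q z, by simp [hT, norm_sph]⟩, by fun_prop⟩
  have K2 := (K.symm.trans h).precomp τ
  apply hl ε hε hle1 c
  convert K2 using 3 with z
  show ε • (z : Eu n) = ε • (P (P z - Q z) - Q (P z - Q z))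
  rw [map_sub, map_sub, hPP, hQQ, hPQ0, hQP0, sub_zero, zero_sub, sub_neg_eq_add, hPQ]

lemma global_null {n : ℕ} (F : Eu n → Eu n) (hF : Continuous F) (hF0 : ∀ z, z ≠ 0 → F z ≠ 0)
    (K : ℝ → Eu n → Eu n) (hK : Continuous fun p : ℝ × Eu n => K p.1 p.2) (hK0 : ∀ z, K 0 z = F z)
    (R : ℝ) (hR : 0 < R) (hKR : ∀ t ∈ Set.Icc (0:ℝ) 1, ∀ z, ‖z‖ = R → K t z ≠ 0)
    (hK1 : ∀ z, K 1 z ≠ 0) (ε : ℝ) (hε : 0 < ε) :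
    HNZ (fun z : Sph n => F (ε • (z : Eu n))) (fun _ => K 1 0) := by
  have h1 := HNZ.mk (n := n) (fun t z => F (((1 - t) * ε + t * R) • (z : Eu n))) (by fun_prop) (by
    intro t ht z
    refine hF0 _ (smul_ne_zero (ne_of_gt ?_) (sph_ne z))
    rcases eq_or_lt_of_le ht.1 with h | h
    · rw [← h]; simpa using hε
    · have := mul_pos h hR; have := mul_nonneg (sub_nonneg.2 ht.2) hε.le; linarith)
  have h2 := HNZ.mk (n := n) (fun t z => K t (R • (z : Eu n)))
    (hK.comp (by fun_prop : Continuous fun p : ℝ × Sph n => (p.1, R • (p.2 : Eu n)))).continuousOn (by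
    intro t ht z
    refine hKR t ht _ ?_
    rw [norm_smul, norm_sph, mul_one, Real.norm_eq_abs, abs_of_pos hR])
  have h3 := HNZ.mk (n := n) (fun t z => K 1 (((1 - t) * R) • (z : Eu n)))
    (hK.comp (by fun_prop : Continuous fun p : ℝ × Sph n => ((1:ℝ), ((1 - p.1) * R) • (p.2 : Eu n)))).continuousOn
    (fun t _ z => hK1 _)
  simp only [sub_zero, zero_smul, one_smul, sub_self, one_mul, zero_mul, add_zero, zero_add, hK0] at h1 h2 h3
  exact (h1.trans h2).trans h3
end Homot


section Sys

/-- An abstract dynamical system with finitely many linearly charted hyperbolic fixed points. -/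
structure HSys (n : ℕ) (M : Type*) [MetricSpace M] where
  G : M ≃ₜ M
  R : Set M
  fin : R.Finite
  φ : M → Eu n → M
  J : M → Finset (Fin n)
  lam : M → ℝ
  lam_gt : ∀ q ∈ R, 1 < lam q
  emb : ∀ q ∈ R, IsOpenEmbedding (φ q)
  zero : ∀ q ∈ R, φ q 0 = q
  fwd : ∀ q ∈ R, ∀ (y : Eu n) (r : ℕ), ∃ y' : Eu n, G^[r] (φ q y) = φ q y' ∧
    (∀ j ∈ J q, |y' j| = lam q ^ r * |y j|) ∧ (∀ j ∉ J q, lam q ^ r * |y' j| = |y j|)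
  bwd : ∀ q ∈ R, ∀ (y : Eu n) (r : ℕ), ∃ y' : Eu n, G.symm^[r] (φ q y) = φ q y' ∧
    (∀ j ∈ J q, lam q ^ r * |y' j| = |y j|) ∧ (∀ j ∉ J q, |y' j| = lam q ^ r * |y j|)
  lim : ∀ z, (∀ ε > (0:ℝ), ∃ y, ∃ r ≥ 1, dist y z < ε ∧ dist (G^[r] y) z < ε) → z ∈ R

namespace HSys
variable {n : ℕ} {M : Type*} [MetricSpace M]

lemma left_inv_iter (G : M ≃ₜ M) (r : ℕ) (x : M) : G.symm^[r] (G^[r] x) = x :=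
  (Function.LeftInverse.iterate G.symm_apply_apply r) x

lemma right_inv_iter (G : M ≃ₜ M) (r : ℕ) (x : M) : G^[r] (G.symm^[r] x) = x :=
  (Function.LeftInverse.iterate G.apply_symm_apply r) x

/-- Time reversal. -/
def symm (S : HSys n M) : HSys n M where
  G := S.G.symm
  R := S.R
  fin := S.fin
  φ := S.φ
  J q := (S.J q)ᶜ
  lam := S.lam
  lam_gt := S.lam_gt
  emb := S.emb
  zero := S.zero
  fwd q hq y r := by
    obtain ⟨y', h1, h2, h3⟩ := S.bwd q hq y r
    exact ⟨y', h1, fun j hj => h3 j (by simpa using hj), fun j hj => h2 j (by simpa using hj)⟩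
  bwd q hq y r := by
    obtain ⟨y', h1, h2, h3⟩ := S.fwd q hq y r
    exact ⟨y', h1, fun j hj => h3 j (by simpa using hj), fun j hj => h2 j (by simpa using hj)⟩
  lim z h := by
    refine S.lim z fun ε hε => ?_
    obtain ⟨y, r, hr, h1, h2⟩ := h ε hε
    exact ⟨S.G.symm^[r] y, r, hr, h2, by rwa [right_inv_iter]⟩

/-- Coordinates of stable points. -/
def Stab (S : HSys n M) (q : M) (y : Eu n) : Prop := ∀ j ∈ S.J q, y j = 0
/-- Coordinates of unstable points. -/
def Unst (S : HSys n M) (q : M) (y : Eu n) : Prop := ∀ j ∉ S.J q, y j = 0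

lemma symm_stab (S : HSys n M) (q : M) (y : Eu n) : S.symm.Stab q y ↔ S.Unst q y := by
  simp [Stab, Unst, symm]
lemma symm_unst (S : HSys n M) (q : M) (y : Eu n) : S.symm.Unst q y ↔ S.Stab q y := by
  simp [Stab, Unst, symm]

lemma stab_unst (S : HSys n M) {q : M} {y : Eu n} (h1 : S.Stab q y) (h2 : S.Unst q y) : y = 0 := by
  ext j
  by_cases hj : j ∈ S.J q
  · exact h1 j hj
  · exact h2 j hj

lemma tendsto_zero_of_coord {u : ℕ → Eu n} (h : ∀ j, Tendsto (fun k => |u k j|) atTop (𝓝 0)) :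
    Tendsto u atTop (𝓝 0) := by
  rw [tendsto_zero_iff_norm_tendsto_zero]
  have h2 : Tendsto (fun k => √(∑ j, ‖u k j‖ ^ 2)) atTop (𝓝 (√(∑ j : Fin n, (0:ℝ) ^ 2))) := by
    refine (Real.continuous_sqrt.tendsto _).comp ?_
    exact tendsto_finsetSum _ fun j _ => (h j).pow 2
  simpa [EuclideanSpace.norm_eq] using h2

lemma norm_eq_of_coord (u v : Eu n) (c : ℝ) (hc : 0 ≤ c) (h : ∀ j, |u j| = c * |v j|) : ‖u‖ = c * ‖v‖ := by
  have : ‖u‖ = ‖c • v‖ := by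
    rw [EuclideanSpace.norm_eq, EuclideanSpace.norm_eq]
    congr 1
    refine Finset.sum_congr rfl fun j _ => ?_
    rw [Real.norm_eq_abs, h]
    simp [abs_mul, mul_pow]
  rw [this, norm_smul, Real.norm_eq_abs, abs_of_nonneg hc]

lemma tendsto_stab (S : HSys n M) {q : M} (hq : q ∈ S.R) {y : Eu n} (hy : S.Stab q y) :
    Tendsto (fun r : ℕ => S.G^[r] (S.φ q y)) atTop (𝓝 q) := by
  choose u hu1 hu2 hu3 using S.fwd q hq y
  have hl := S.lam_gt q hq
  have : Tendsto u atTop (𝓝 0) := by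
    refine tendsto_zero_of_coord fun j => ?_
    by_cases hj : j ∈ S.J q
    · have : ∀ k, |u k j| = 0 := fun k => by rw [hu2 k j hj, hy j hj]; simp
      simp [this]
    · have h3 : ∀ k, |u k j| = (S.lam q)⁻¹ ^ k * |y j| := fun k => by
        rw [← hu3 k j hj, inv_pow, ← mul_assoc, inv_mul_cancel₀ (by positivity), one_mul]
      simp only [h3]
      have := (tendsto_pow_atTop_nhds_zero_of_lt_one (r := (S.lam q)⁻¹) (by positivity) (inv_lt_one_of_one_lt₀ hl)).mul_const |y j|
      simpa using this
  have h2 := ((S.emb q hq).continuous.tendsto 0).comp this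
  rw [S.zero q hq] at h2
  refine h2.congr fun r => (hu1 r).symm

lemma stab_unique (S : HSys n M) {q q' : M} (hq : q ∈ S.R) (hq' : q' ∈ S.R) {y y' : Eu n}
    (hy : S.Stab q y) (hy' : S.Stab q' y') (h : S.φ q y = S.φ q' y') : q = q' := by
  have h1 := S.tendsto_stab hq hy
  rw [h] at h1
  exact tendsto_nhds_unique h1 (S.tendsto_stab hq' hy')

lemma unst_unique (S : HSys n M) {q q' : M} (hq : q ∈ S.R) (hq' : q' ∈ S.R) {y y' : Eu n}
    (hy : S.Unst q y) (hy' : S.Unst q' y') (h : S.φ q y = S.φ q' y') : q = q' :=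
  S.symm.stab_unique hq hq' ((S.symm_stab _ _).2 hy) ((S.symm_stab _ _).2 hy') h

lemma exists_stab [CompactSpace M] (S : HSys n M) (x : M) : ∃ q ∈ S.R, ∃ y, S.Stab q y ∧ S.φ q y = x := by
  obtain ⟨q, -, ψ, hψ, hlim⟩ := isCompact_univ.tendsto_subseq (x := fun k : ℕ => S.G^[k] x) (fun _ => trivial)
  have hq : q ∈ S.R := by
    refine S.lim q fun ε hε => ?_
    obtain ⟨N, hN⟩ := Metric.tendsto_atTop.1 hlim ε hε
    have hlt : ψ N < ψ (N+1) := hψ (Nat.lt_succ_self N)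
    refine ⟨S.G^[ψ N] x, ψ (N+1) - ψ N, by omega, hN N le_rfl, ?_⟩
    rw [← Function.iterate_add_apply, Nat.sub_add_cancel hlt.le]
    exact hN (N+1) (Nat.le_succ N)
  have hl := S.lam_gt q hq
  have hr : Set.range (S.φ q) ∈ 𝓝 q := (S.emb q hq).isOpen_range.mem_nhds ⟨0, S.zero q hq⟩
  obtain ⟨k, y0, hy0⟩ := (hlim.eventually hr).exists
  obtain ⟨y, hy, -, -⟩ := S.bwd q hq y0 (ψ k)
  have hxy : S.φ q y = x := by
    rw [← hy, hy0]; exact left_inv_iter _ _ _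
  refine ⟨q, hq, y, fun j hj => ?_, hxy⟩
  choose u hu1 hu2 hu3 using S.fwd q hq y
  have ht : Tendsto (fun k => u (ψ k)) atTop (𝓝 0) := by
    rw [(S.emb q hq).isInducing.tendsto_nhds_iff, S.zero q hq]
    refine hlim.congr fun k => ?_
    simp only [Function.comp]
    rw [← hu1, hxy]
  have h1 : Tendsto (fun k => |u (ψ k) j|) atTop (𝓝 0) := by
    have h2 : Continuous (fun y : Eu n => |y j|) := by fun_prop
    simpa [Function.comp_def] using (h2.tendsto 0).comp ht
  have h3 : |y j| ≤ 0 := by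
    refine ge_of_tendsto' h1 fun k => ?_
    rw [hu2 _ j hj]
    have : 1 ≤ S.lam q ^ ψ k := one_le_pow₀ hl.le
    nlinarith [abs_nonneg (y j)]
  simpa using h3

lemma sink_mem (S : HSys n M) {q : M} (h : S.J q = ∅) (y : Eu n) : S.Stab q y := by
  simp [Stab, h]

lemma source_stab (S : HSys n M) {q : M} (h : S.J q = Finset.univ) {y : Eu n} (hy : S.Stab q y) : y = 0 := by
  ext j
  exact hy j (by simp [h])

lemma conn_unst (J : Finset (Fin n)) (hJ : 2 ≤ J.card) :
    IsConnected {x : Eu n | (∀ j ∉ J, x j = 0) ∧ x ≠ 0} := by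
  classical
  have h1 : IsConnected ({0}ᶜ : Set (J → ℝ)) := by
    apply isConnected_compl_singleton_of_one_lt_rank
    rw [rank_fun']
    simp
    omega
  let e : (J → ℝ) → Eu n := fun v => WithLp.toLp 2 fun j => if h : j ∈ J then v ⟨j, h⟩ else 0
  have he : Continuous e := by
    refine (PiLp.continuous_toLp 2 _).comp (continuous_pi fun j => ?_)
    by_cases h : j ∈ J
    · simp only [h, dite_true]; fun_prop
    · simp only [h, dite_false]; fun_prop
  convert h1.image e he.continuousOn using 1
  ext x
  constructor
  · rintro ⟨h2, h3⟩
    refine ⟨fun j => x j, ?_, ?_⟩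
    · intro h4
      apply h3
      ext j
      by_cases h : j ∈ J
      · exact congrFun h4 ⟨j, h⟩
      · exact h2 j h
    · ext j
      by_cases h : j ∈ J
      · simp [e, h]
      · simp [e, h, h2 j h]
  · rintro ⟨v, hv, rfl⟩
    refine ⟨fun j hj => by simp [e, hj], fun h => hv ?_⟩
    ext j
    have := congrArg (fun x : Eu n => x j) h
    simpa [e] using this

lemma basin [CompactSpace M] (S : HSys n M) {p : M} (hp : p ∈ S.R) (hJ : 2 ≤ (S.J p).card)
    (hne : ∀ q ∈ S.R, q ≠ p → S.J q ≠ ∅ → S.J q ≠ Finset.univ → ∀ x y, S.Unst p x → S.Stab q y →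
      S.φ p x ≠ S.φ q y) :
    ∃ ω ∈ S.R, S.J ω = ∅ ∧ ∀ x, S.Unst p x → x ≠ 0 → S.φ p x ∈ Set.range (S.φ ω) := by
  have key : ∀ x, S.Unst p x → x ≠ 0 → ∃ q ∈ S.R, S.J q = ∅ ∧ S.φ p x ∈ Set.range (S.φ q) := by
    intro x hx hx0
    obtain ⟨q, hq, y, hy, hxy⟩ := S.exists_stab (S.φ p x)
    by_cases hs : S.J q = ∅
    · exact ⟨q, hq, hs, y, hxy⟩
    exfalso
    by_cases hqp : q = p
    · subst hqp
      have := (S.emb q hq).injective hxy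
      subst this
      exact hx0 (S.stab_unst hy hx)
    by_cases hso : S.J q = Finset.univ
    · have h0 := S.source_stab hso hy
      subst h0
      exact hqp (S.unst_unique hq hp (fun j _ => rfl) hx hxy)
    · exact hne q hq hqp hs hso x y hx hy hxy.symm
  have hc := (conn_unst (S.J p) hJ).image (S.φ p) (S.emb p hp).continuous.continuousOn
  obtain ⟨_, x0, ⟨hx0, hx00⟩, rfl⟩ := hc.nonempty
  obtain ⟨ω, hω, hωs, hm⟩ := key x0 hx0 hx00
  refine ⟨ω, hω, hωs, ?_⟩
  have := hc.isPreconnected.subset_left_of_subset_union (u := Set.range (S.φ ω))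
    (v := ⋃ q ∈ {q | q ∈ S.R ∧ S.J q = ∅ ∧ q ≠ ω}, Set.range (S.φ q))
    (S.emb ω hω).isOpen_range (isOpen_biUnion fun q hq => (S.emb q hq.1).isOpen_range) (by
      rw [Set.disjoint_left]
      rintro _ ⟨y, rfl⟩ h
      simp only [Set.mem_iUnion] at h
      obtain ⟨q, ⟨hq, hqs, hqω⟩, y', hy'⟩ := h
      exact hqω (S.stab_unique hq hω (S.sink_mem hqs _) (S.sink_mem hωs _) hy')) (by
      rintro _ ⟨x, ⟨hx, hx0⟩, rfl⟩
      obtain ⟨q, hq, hqs, hmq⟩ := key x hx hx0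
      by_cases h : q = ω
      · left; rwa [← h]
      · refine Or.inr (Set.mem_biUnion (show q ∈ {q | q ∈ S.R ∧ S.J q = ∅ ∧ q ≠ ω} from ⟨hq, hqs, h⟩) hmq)) ⟨S.φ p x0, Set.mem_image_of_mem (S.φ p) (show x0 ∈ {x : Eu n | (∀ j ∉ S.J p, x j = 0) ∧ x ≠ 0} from ⟨hx0, hx00⟩), hm⟩
  intro x hx hx0
  exact this ⟨x, ⟨hx, hx0⟩, rfl⟩

lemma reach (S : HSys n M) {p ω : M} (hp : p ∈ S.R) (hω : ω ∈ S.R) (hωs : S.J ω = ∅)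
    (hb : ∀ x, S.Unst p x → x ≠ 0 → S.φ p x ∈ Set.range (S.φ ω)) {r : ℝ} (hr : 0 < r) :
    ∃ ρ > (0:ℝ), ∀ x, S.Unst p x → ‖x‖ = ρ → ∃ y, ‖y‖ < r ∧ S.φ ω y = S.φ p x := by
  have hlp := S.lam_gt p hp
  have hlω := S.lam_gt ω hω
  have hK : IsCompact (Metric.sphere (0 : Eu n) 1 ∩ {x | S.Unst p x}) := by
    refine (isCompact_sphere _ _).inter_right ?_
    have : {x : Eu n | S.Unst p x} = ⋂ j, ⋂ (_ : j ∉ S.J p), {x : Eu n | x j = 0} := by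
      ext x; simp [Unst]
    rw [this]
    exact isClosed_iInter fun j => isClosed_iInter fun _ => isClosed_eq (by fun_prop) continuous_const
  have hK2 := hK.image (S.emb p hp).continuous
  have hK3 : IsCompact (S.φ ω ⁻¹' (S.φ p '' (Metric.sphere (0 : Eu n) 1 ∩ {x | S.Unst p x}))) := by
    refine (S.emb ω hω).isInducing.isCompact_preimage' hK2 ?_
    rintro _ ⟨x, ⟨hx1, hx2⟩, rfl⟩
    refine hb x hx2 ?_
    rintro rfl
    simp at hx1
  obtain ⟨C, hC⟩ := hK3.isBounded.exists_norm_le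
  obtain ⟨k, hk⟩ : ∃ k : ℕ, C / r < S.lam ω ^ k := pow_unbounded_of_one_lt _ hlω
  refine ⟨S.lam p ^ k, by positivity, fun x hx hxn => ?_⟩
  obtain ⟨x', h1, h2, h3⟩ := S.bwd p hp x k
  have hx' : S.Unst p x' := fun j hj => by
    have := h3 j hj
    rw [hx j hj] at this; simpa using this
  have hn' : ‖x‖ = S.lam p ^ k * ‖x'‖ := norm_eq_of_coord _ _ _ (by positivity) fun j => by
    by_cases hj : j ∈ S.J p
    · exact (h2 j hj).symm
    · rw [hx j hj, hx' j hj]; simp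
  have hn1 : ‖x'‖ = 1 := by
    rw [hxn] at hn'
    have : 0 < S.lam p ^ k := by positivity
    nlinarith
  obtain ⟨y', hy'⟩ := hb x' hx' (by rintro rfl; simp at hn1)
  obtain ⟨y, g1, -, g3⟩ := S.fwd ω hω y' k
  have hny : ‖y'‖ = S.lam ω ^ k * ‖y‖ := norm_eq_of_coord _ _ _ (by positivity) fun j =>
    (g3 j (by simp [hωs])).symm
  have hyC : ‖y'‖ ≤ C := hC y' ⟨x', ⟨by simpa using hn1, hx'⟩, hy'.symm⟩
  refine ⟨y, ?_, ?_⟩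
  · rw [div_lt_iff₀ hr] at hk
    have : 0 < S.lam ω ^ k := by positivity
    by_contra! h
    nlinarith
  · rw [← g1, hy', ← h1, right_inv_iter]

end HSys
end Sys

namespace HSys
variable {n : ℕ} {M : Type*} [MetricSpace M]

lemma source_basin [CompactSpace M] (hn : 2 ≤ n) (S : HSys n M)
    (hns : ∀ q ∈ S.R, S.J q = ∅ ∨ S.J q = Finset.univ) {α : M} (hα : α ∈ S.R) (hαs : S.J α = Finset.univ) :
    ∃ ω ∈ S.R, S.J ω = ∅ ∧ ∀ x, x ≠ 0 → S.φ α x ∈ Set.range (S.φ ω) := by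
  obtain ⟨ω, h1, h2, h3⟩ := S.basin hα (by simpa [hαs] using hn) (by
    intro q hq _ h1 h2
    exact absurd (hns q hq) (by tauto))
  exact ⟨ω, h1, h2, fun x hx => h3 x (fun j hj => absurd (by simp [hαs]) hj) hx⟩

lemma unique_sink [CompactSpace M] [ConnectedSpace M] (hn : 2 ≤ n) (S : HSys n M)
    (hns : ∀ q ∈ S.R, S.J q = ∅ ∨ S.J q = Finset.univ) :
    ∃ ω ∈ S.R, S.J ω = ∅ ∧ ∀ q ∈ S.R, S.J q = ∅ → q = ω := by
  have hne : (∅ : Finset (Fin n)) ≠ Finset.univ := by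
    intro h
    have := congrArg Finset.card h
    simp at this; omega
  let A : M → Set M := fun ω => Set.range (S.φ ω) ∪
    {a | a ∈ S.R ∧ S.J a = Finset.univ ∧ ∀ x, x ≠ 0 → S.φ a x ∈ Set.range (S.φ ω)}
  have hopen : ∀ ω ∈ S.R, S.J ω = ∅ → IsOpen (A ω) := by
    intro ω hω hωs
    rw [isOpen_iff_mem_nhds]
    rintro x (hx | ⟨hx, hxs, hxb⟩)
    · exact mem_of_superset ((S.emb ω hω).isOpen_range.mem_nhds hx) Set.subset_union_left
    · refine mem_of_superset ((S.emb x hx).isOpen_range.mem_nhds ⟨0, S.zero x hx⟩) ?_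
      rintro _ ⟨y, rfl⟩
      by_cases hy : y = 0
      · subst hy; rw [S.zero x hx]; exact Or.inr ⟨hx, hxs, hxb⟩
      · exact Or.inl (hxb y hy)
  have hcov : ∀ x, ∃ ω ∈ S.R, S.J ω = ∅ ∧ x ∈ A ω := by
    intro x
    obtain ⟨q, hq, y, hy, hxy⟩ := S.exists_stab x
    rcases hns q hq with h | h
    · exact ⟨q, hq, h, Or.inl ⟨y, hxy⟩⟩
    · have h0 := S.source_stab h hy
      subst h0
      rw [S.zero q hq] at hxy
      subst hxy
      obtain ⟨ω, h1, h2, h3⟩ := S.source_basin hn hns hq h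
      exact ⟨ω, h1, h2, Or.inr ⟨hq, h, h3⟩⟩
  have hbd : ∀ ω ∈ S.R, S.J ω = ∅ → ∀ ω' ∈ S.R, S.J ω' = ∅ → ∀ x, x ∈ Set.range (S.φ ω) →
      x ∈ Set.range (S.φ ω') → ω = ω' := by
    rintro ω hω hs ω' hω' hs' x ⟨y, hy⟩ ⟨y', hy'⟩
    exact S.stab_unique hω hω' (S.sink_mem hs _) (S.sink_mem hs' _) (hy.trans hy'.symm)
  have hsb : ∀ ω ∈ S.R, S.J ω = ∅ → ∀ a ∈ S.R, S.J a = Finset.univ → a ∉ Set.range (S.φ ω) := by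
    rintro ω hω hs a ha has ⟨y, hy⟩
    have := S.stab_unique (y' := 0) hω ha (S.sink_mem hs y) (fun j _ => rfl) (by rw [hy, S.zero a ha])
    subst this
    exact hne (hs.symm.trans has)
  obtain ⟨e, he⟩ : ∃ e : Eu n, e ≠ 0 := by
    have : Nonempty (Fin n) := ⟨⟨0, by omega⟩⟩
    exact exists_ne 0
  have hdis : ∀ ω ∈ S.R, S.J ω = ∅ → ∀ ω' ∈ S.R, S.J ω' = ∅ → ∀ x, x ∈ A ω → x ∈ A ω' → ω = ω' := by
    rintro ω hω hs ω' hω' hs' x (h | ⟨h1, h2, h3⟩) (h' | ⟨h1', h2', h3'⟩)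
    · exact hbd ω hω hs ω' hω' hs' x h h'
    · exact absurd h (hsb ω hω hs x h1' h2')
    · exact absurd h' (hsb ω' hω' hs' x h1 h2)
    · exact hbd ω hω hs ω' hω' hs' _ (h3 e he) (h3' e he)
  obtain ⟨x0⟩ := (inferInstance : Nonempty M)
  obtain ⟨ω, hω, hωs, hx0⟩ := hcov x0
  have hclopen : IsClopen (A ω) := by
    refine ⟨⟨?_⟩, hopen ω hω hωs⟩
    have : (A ω)ᶜ = ⋃ ω' ∈ {q | q ∈ S.R ∧ S.J q = ∅ ∧ q ≠ ω}, A ω' := by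
      ext x
      simp only [Set.mem_iUnion, Set.mem_compl_iff]
      constructor
      · intro hx
        obtain ⟨ω', h1, h2, h3⟩ := hcov x
        exact ⟨ω', ⟨h1, h2, fun h => hx (h ▸ h3)⟩, h3⟩
      · rintro ⟨ω', ⟨h1, h2, h3⟩, h4⟩ hx
        exact h3 (hdis ω' h1 h2 ω hω hωs x h4 hx)
    rw [this]
    exact isOpen_biUnion fun q hq => hopen q hq.1 hq.2.1
  have huniv := hclopen.eq_univ ⟨x0, hx0⟩
  refine ⟨ω, hω, hωs, fun q hq hqs => ?_⟩
  have h1 : q ∈ A ω := by rw [huniv]; trivial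
  exact hdis q hq hqs ω hω hωs q (Or.inl ⟨0, S.zero q hq⟩) h1

lemma sphere_of_no_saddle [CompactSpace M] [ConnectedSpace M] (hn : 2 ≤ n) (S : HSys n M)
    (hns : ∀ q ∈ S.R, S.J q = ∅ ∨ S.J q = Finset.univ) :
    Nonempty (M ≃ₜ (Metric.sphere (0 : EuclideanSpace ℝ (Fin (n + 1))) 1)) := by
  have hne : (∅ : Finset (Fin n)) ≠ Finset.univ := by
    intro h
    have := congrArg Finset.card h
    simp at this; omega
  obtain ⟨ω, hω, hωs, hωu⟩ := S.unique_sink hn hns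
  obtain ⟨α, hα, hαs, hαu⟩ := S.symm.unique_sink hn (by
    intro q hq
    rcases hns q hq with h | h
    · right; simp [symm, h]
    · left; simp [symm, h])
  replace hα : α ∈ S.R := hα
  replace hαs : S.J α = Finset.univ := by simpa [symm] using hαs
  replace hαu : ∀ q ∈ S.R, S.J q = Finset.univ → q = α := by
    intro q hq hqs
    exact hαu q hq (by simp [symm, hqs])
  have hrange : Set.range (S.φ ω) = {α}ᶜ := by
    ext x
    constructor
    · rintro ⟨y, rfl⟩ (hy : S.φ ω y = α)
      have := S.stab_unique (y' := 0) hω hα (S.sink_mem hωs y) (fun j _ => rfl) (by rw [hy, S.zero α hα])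
      subst this
      exact hne (hωs.symm.trans hαs)
    · intro hx
      obtain ⟨q, hq, y, hy, hxy⟩ := S.exists_stab x
      rcases hns q hq with h | h
      · rw [← hωu q hq h]; exact ⟨y, hxy⟩
      · have h0 := S.source_stab h hy
        subst h0
        rw [S.zero q hq] at hxy
        exact absurd (hxy.symm.trans (hαu q hq h)) hx
  have e1 := OnePoint.equivOfIsEmbeddingOfRangeEq (X := Eu n) (f := S.φ ω) (S.emb ω hω).isEmbedding (y := α) hrange
  have e2 := onePointEquivSphereOfFinrankEq (ι := Fin (n+1)) (V := Eu n) (by simp)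
  exact ⟨e1.symm.trans e2⟩
end HSys

section Cap
variable {n : ℕ} {M : Type*} [MetricSpace M]

/-- Coordinate projection. -/
noncomputable def coordProj (J : Finset (Fin n)) : Eu n →L[ℝ] Eu n :=
  LinearMap.toContinuousLinearMap
    { toFun := fun z => WithLp.toLp 2 fun j => if j ∈ J then z j else 0
      map_add' := by
        intro x y; ext j
        by_cases h : j ∈ J <;> simp [h]
      map_smul' := by
        intro c x; ext j
        by_cases h : j ∈ J <;> simp [h] }

lemma coordProj_apply (J : Finset (Fin n)) (z : Eu n) (j : Fin n) :
    coordProj J z j = if j ∈ J then z j else 0 := rfl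

lemma coordProj_le (J : Finset (Fin n)) (z : Eu n) : ‖coordProj J z‖ ≤ ‖z‖ := by
  rw [EuclideanSpace.norm_eq, EuclideanSpace.norm_eq]
  refine Real.sqrt_le_sqrt (Finset.sum_le_sum fun j _ => ?_)
  rw [coordProj_apply]
  split_ifs
  · exact le_rfl
  · simp [sq_nonneg]

lemma coordProj_idem (J : Finset (Fin n)) (z : Eu n) : coordProj J (coordProj J z) = coordProj J z := by
  ext j
  simp only [coordProj_apply]
  split_ifs <;> rfl

lemma coordProj_add (J : Finset (Fin n)) (z : Eu n) : coordProj J z + coordProj Jᶜ z = z := by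
  ext j
  rw [PiLp.add_apply, coordProj_apply, coordProj_apply]
  by_cases h : j ∈ J <;> simp [h]

lemma coordProj_sub (J : Finset (Fin n)) (z : Eu n) : ‖coordProj J z - coordProj Jᶜ z‖ = ‖z‖ := by
  rw [HSys.norm_eq_of_coord (coordProj J z - coordProj Jᶜ z) z 1 zero_le_one, one_mul]
  intro j
  rw [PiLp.sub_apply, coordProj_apply, coordProj_apply]
  by_cases h : j ∈ J <;> simp [h]

lemma cap {C : Set (Eu n)} (hC : IsClosed C) (hCs : ∀ (c : ℝ), ∀ x ∈ C, c • x ∈ C)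
    (φ φ' : Eu n → M) (hφ : Continuous φ) (hφ' : IsOpenEmbedding φ') (ρ r : ℝ) (hρ : 0 < ρ)
    (h : ∀ x ∈ C, ‖x‖ = ρ → ∃ y, ‖y‖ < r ∧ φ' y = φ x) (κ : ℝ → ℝ)
    (hκ : ContinuousOn κ (Set.Ici ρ)) (hκ1 : κ ρ = 1) :
    ∃ u : Eu n → M, ContinuousOn u C ∧ (∀ x ∈ C, ‖x‖ ≤ ρ → u x = φ x) ∧
      ∀ x ∈ C, ρ < ‖x‖ → ∃ y, ‖y‖ < r ∧ φ' y = φ ((ρ / ‖x‖) • x) ∧ u x = φ' (κ ‖x‖ • y) := by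
  classical
  let ψ := (hφ'.toOpenPartialHomeomorph φ').symm
  have hψc : ContinuousOn ψ (Set.range φ') := by
    have := (hφ'.toOpenPartialHomeomorph φ').continuousOn_symm
    simpa using this
  have hψ : ∀ y, ψ (φ' y) = y := fun y =>
    (hφ'.toOpenPartialHomeomorph φ').left_inv (by simp)
  have hnorm : ∀ x : Eu n, ρ ≤ ‖x‖ → ‖(ρ / ‖x‖) • x‖ = ρ := by
    intro x hx
    have : 0 < ‖x‖ := hρ.trans_le hx
    rw [norm_smul, Real.norm_eq_abs, abs_of_pos (by positivity)]
    field_simp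
  let w : Eu n → M := fun x => φ' (κ ‖x‖ • ψ (φ ((ρ / ‖x‖) • x)))
  have hw : ContinuousOn w (C ∩ {x | ρ ≤ ‖x‖}) := by
    suffices h5 : ContinuousOn (fun x : Eu n => κ ‖x‖ • ψ (φ ((ρ / ‖x‖) • x))) (C ∩ {x | ρ ≤ ‖x‖}) from
      hφ'.continuous.comp_continuousOn h5
    have h6 : ContinuousOn (fun x : Eu n => κ ‖x‖) (C ∩ {x | ρ ≤ ‖x‖}) :=
      hκ.comp continuous_norm.continuousOn (fun x hx => hx.2)
    have h4 : ContinuousOn (fun x : Eu n => (ρ / ‖x‖) • x) (C ∩ {x | ρ ≤ ‖x‖}) := by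
      have h8 : ContinuousOn (fun x : Eu n => ρ / ‖x‖) (C ∩ {x | ρ ≤ ‖x‖}) :=
        ContinuousOn.div continuousOn_const continuous_norm.continuousOn
          (fun x hx => (hρ.trans_le hx.2).ne')
      exact h8.smul continuousOn_id
    have h7 : ContinuousOn (fun x : Eu n => ψ (φ ((ρ / ‖x‖) • x))) (C ∩ {x | ρ ≤ ‖x‖}) := by
      refine hψc.comp (hφ.comp_continuousOn h4) ?_
      intro x hx
      obtain ⟨y, -, hy⟩ := h _ (hCs (ρ / ‖x‖) x hx.1) (hnorm x hx.2)
      exact ⟨y, hy⟩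
    exact h6.smul h7
  let u : Eu n → M := fun x => if ‖x‖ ≤ ρ then φ x else w x
  have hu1 : ∀ x, ‖x‖ ≤ ρ → u x = φ x := fun x hx => by simp [u, hx]
  have hu2 : ∀ x ∈ C, ρ ≤ ‖x‖ → u x = w x := by
    intro x hxC hx
    rcases hx.eq_or_lt with hx' | hx'
    · rw [hu1 x hx'.symm.le]
      obtain ⟨y, -, hy⟩ := h x hxC hx'.symm
      simp only [w]
      rw [← hx', hκ1, div_self hρ.ne', one_smul, one_smul, ← hy, hψ]
    · simp [u, not_le.2 hx']
  refine ⟨u, ?_, fun x _ => hu1 x, ?_⟩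
  · have h1 : ContinuousOn u (C ∩ {x | ‖x‖ ≤ ρ}) := hφ.continuousOn.congr fun x hx => hu1 x hx.2
    have h2 : ContinuousOn u (C ∩ {x | ρ ≤ ‖x‖}) := hw.congr fun x hx => hu2 x hx.1 hx.2
    have h3 := h1.union_of_isClosed h2 (hC.inter (isClosed_le continuous_norm continuous_const))
      (hC.inter (isClosed_le continuous_const continuous_norm))
    refine h3.mono fun x hx => ?_
    rcases le_total ‖x‖ ρ with h | h
    · exact Or.inl ⟨hx, h⟩
    · exact Or.inr ⟨hx, h⟩
  · intro x hxC hx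
    obtain ⟨y, hy1, hy⟩ := h _ (hCs (ρ / ‖x‖) x hxC) (hnorm x hx.le)
    refine ⟨y, hy1, hy, ?_⟩
    rw [hu2 x hxC hx.le]
    simp only [w]
    rw [← hy, hψ]

namespace HSys

lemma unst_proj (S : HSys n M) (p : M) (z : Eu n) : S.Unst p (coordProj (S.J p) z) := by
  intro j hj; simp [coordProj_apply, hj]
lemma stab_proj (S : HSys n M) (p : M) (z : Eu n) : S.Stab p (coordProj (S.J p)ᶜ z) := by
  intro j hj; simp [coordProj_apply, hj]

lemma isClosed_unst (S : HSys n M) (p : M) : IsClosed {x | S.Unst p x} := by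
  have : {x : Eu n | S.Unst p x} = ⋂ j, ⋂ (_ : j ∉ S.J p), {x : Eu n | x j = 0} := by
    ext x; simp [Unst]
  rw [this]
  exact isClosed_iInter fun j => isClosed_iInter fun _ => isClosed_eq (by fun_prop) continuous_const

lemma isClosed_stab (S : HSys n M) (p : M) : IsClosed {x | S.Stab p x} := by
  simpa only [symm_unst] using S.symm.isClosed_unst p

lemma contra (hn : 1 ≤ n) (S : HSys n M) {p ω α : M} (hp : p ∈ S.R) (hω : ω ∈ S.R) (hα : α ∈ S.R)
    (hωs : S.J ω = ∅) (hαs : S.J α = Finset.univ) (hpω : p ≠ ω) (hpα : p ≠ α) (hωα : ω ≠ α)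
    (hbu : ∀ x, S.Unst p x → x ≠ 0 → S.φ p x ∈ Set.range (S.φ ω))
    (hbs : ∀ x, S.Stab p x → x ≠ 0 → S.φ p x ∈ Set.range (S.φ α))
    (χ : OpenPartialHomeomorph M (Eu n)) (hχs : χ.source = {α}ᶜ) (hχt : χ.target = Set.univ)
    (hχp : χ p = 0) : False := by
  have hcω := (S.emb ω hω).continuous
  have hcα := (S.emb α hα).continuous
  have hcp := (S.emb p hp).continuous
  -- radius with disjoint balls
  obtain ⟨r, hr, hdisj⟩ : ∃ r > (0:ℝ), ∀ y y' : Eu n, ‖y‖ < r → ‖y'‖ < r → S.φ ω y ≠ S.φ α y' := by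
    obtain ⟨A, B, hA, hB, hωA, hαB, hAB⟩ := t2_separation hωα
    have h1 : S.φ ω ⁻¹' A ∈ 𝓝 (0 : Eu n) := by
      refine hcω.continuousAt.preimage_mem_nhds (hA.mem_nhds ?_); rwa [S.zero ω hω]
    have h2 : S.φ α ⁻¹' B ∈ 𝓝 (0 : Eu n) := by
      refine hcα.continuousAt.preimage_mem_nhds (hB.mem_nhds ?_); rwa [S.zero α hα]
    obtain ⟨r, hr, hrs⟩ := Metric.mem_nhds_iff.1 (inter_mem h1 h2)
    refine ⟨r, hr, fun y y' hy hy' h => ?_⟩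
    have h3 : S.φ ω y ∈ A := (hrs (mem_ball_zero_iff.2 hy)).1
    have h4 : S.φ α y' ∈ B := (hrs (mem_ball_zero_iff.2 hy')).2
    exact Set.disjoint_left.1 hAB h3 (h ▸ h4)
  obtain ⟨a, ha, hau⟩ := S.reach hp hω hωs hbu hr
  obtain ⟨b, hb, hbb⟩ := S.symm.reach (p := p) (ω := α) hp hα (by simp [symm, hαs])
    (fun x hx => hbs x ((S.symm_unst p x).1 hx)) hr
  replace hbb : ∀ x, S.Stab p x → ‖x‖ = b → ∃ y, ‖y‖ < r ∧ S.φ α y = S.φ p x :=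
    fun x hx => hbb x ((S.symm_unst p x).2 hx)
  obtain ⟨u, huc, hui, huo⟩ := cap (C := {x | S.Unst p x}) (S.isClosed_unst p)
    (fun c x hx j hj => by have := hx j hj; simp [this]) (S.φ p) (S.φ ω) hcp (S.emb ω hω) a r ha hau
    (fun t => max 0 (1 + a - t)) (by fun_prop) (by simp)
  obtain ⟨s, hsc, hsi, hso⟩ := cap (C := {x | S.Stab p x}) (S.isClosed_stab p)
    (fun c x hx j hj => by have := hx j hj; simp [this]) (S.φ p) (S.φ α) hcp (S.emb α hα) b r hb hbb
    (fun t => b / t) (ContinuousOn.div continuousOn_const continuousOn_id (fun t ht => (hb.trans_le ht).ne'))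
    (div_self hb.ne')
  have huo' : ∀ x, S.Unst p x → a < ‖x‖ → ∃ y, ‖y‖ < r ∧ u x = S.φ ω y := by
    intro x hx hax
    obtain ⟨y, hy, -, hy2⟩ := huo x hx hax
    refine ⟨_, ?_, hy2⟩
    rw [norm_smul, Real.norm_eq_abs, abs_of_nonneg (le_max_left _ _)]
    have : max 0 (1 + a - ‖x‖) ≤ 1 := max_le zero_le_one (by linarith)
    have h0 : 0 ≤ max 0 (1 + a - ‖x‖) := le_max_left _ _
    nlinarith [norm_nonneg y]
  have huω : ∀ x, S.Unst p x → a + 1 ≤ ‖x‖ → u x = ω := by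
    intro x hx hax
    obtain ⟨y, hy, -, hy2⟩ := huo x hx (by linarith)
    rw [hy2, max_eq_left (by linarith), zero_smul, S.zero ω hω]
  have hso' : ∀ x, S.Stab p x → b < ‖x‖ → ∃ y, ‖y‖ < r ∧ ‖y‖ ≤ b * r / ‖x‖ ∧ y ≠ 0 ∧ s x = S.φ α y := by
    intro x hx hbx
    obtain ⟨y, hy, hy1, hy2⟩ := hso x hx hbx
    have hx0 : 0 < ‖x‖ := hb.trans hbx
    have hn1 : ‖(b / ‖x‖) • y‖ = b / ‖x‖ * ‖y‖ := by
      rw [norm_smul, Real.norm_eq_abs, abs_of_pos (by positivity)]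
    refine ⟨_, ?_, ?_, ?_, hy2⟩
    · rw [hn1]
      have : b / ‖x‖ < 1 := (div_lt_one hx0).2 hbx
      have h0 : 0 < b / ‖x‖ := by positivity
      nlinarith [norm_nonneg y]
    · rw [hn1, div_mul_eq_mul_div]
      gcongr
    · refine smul_ne_zero (by positivity) ?_
      rintro rfl
      have h4 : S.Stab p ((b / ‖x‖) • x) := fun j hj => by simp [hx j hj]
      exact hpα (S.stab_unique hp hα (y' := 0) h4 (fun j _ => rfl) hy1.symm)
  have hU0 : ∀ q, S.Unst q 0 := fun q j _ => rfl
  have hS0 : ∀ q, S.Stab q 0 := fun q j _ => rfl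
  have hSω : ∀ y, S.Stab ω y := S.sink_mem hωs
  have hUα : ∀ y, S.Unst α y := fun y j hj => absurd (by simp [hαs]) hj
  -- avoid α
  have huα : ∀ x, S.Unst p x → u x ≠ α := by
    intro x hx h
    rcases le_or_gt ‖x‖ a with hle | hlt
    · rw [hui x hx hle] at h
      exact hpα (S.unst_unique hp hα hx (hU0 α) (by rw [h, S.zero α hα]))
    · obtain ⟨y, hy, hy2⟩ := huo' x hx hlt
      exact hdisj y 0 hy (by simpa using hr) (by rw [← hy2, h, S.zero α hα])
  have hsα : ∀ x, S.Stab p x → s x ≠ α := by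
    intro x hx h
    rcases le_or_gt ‖x‖ b with hle | hlt
    · rw [hsi x hx hle] at h
      exact hpα (S.stab_unique hp hα hx (hS0 α) (by rw [h, S.zero α hα]))
    · obtain ⟨y, -, -, hy0, hy2⟩ := hso' x hx hlt
      exact hy0 ((S.emb α hα).injective (by rw [← hy2, h, S.zero α hα]))
  have hsω : ∀ x, S.Stab p x → s x ≠ ω := by
    intro x hx h
    rcases le_or_gt ‖x‖ b with hle | hlt
    · rw [hsi x hx hle] at h
      exact hpω (S.stab_unique hp hω hx (hS0 ω) (by rw [h, S.zero ω hω]))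
    · obtain ⟨y, hyr, -, hy0, hy2⟩ := hso' x hx hlt
      exact hdisj 0 y (by simpa using hr) hyr (by rw [← hy2, h, S.zero ω hω])
  have hmem : ∀ x, x ≠ α → x ∈ χ.source := fun x hx => by rw [hχs]; exact hx
  have hus : ∀ x y, S.Unst p x → S.Stab p y → u x = s y → x = 0 ∧ y = 0 := by
    intro x y hx hy h
    rcases le_or_gt ‖x‖ a with hxa | hxa <;> rcases le_or_gt ‖y‖ b with hyb | hyb
    · rw [hui x hx hxa, hsi y hy hyb] at h
      have := (S.emb p hp).injective h
      subst this
      have := S.stab_unst hy hx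
      exact ⟨this, this⟩
    · obtain ⟨y', -, -, -, hy2⟩ := hso' y hy hyb
      rw [hui x hx hxa, hy2] at h
      exact absurd (S.unst_unique hp hα hx (hUα _) h) hpα
    · obtain ⟨x', -, hx2⟩ := huo' x hx hxa
      rw [hx2, hsi y hy hyb] at h
      exact absurd (S.stab_unique hp hω hy (hSω _) h.symm) hpω
    · obtain ⟨y', hyr, -, -, hy2⟩ := hso' y hy hyb
      obtain ⟨x', hxr, hx2⟩ := huo' x hx hxa
      exact absurd (hx2.symm.trans (h.trans hy2)) (hdisj x' y' hxr hyr)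
  set P := coordProj (S.J p) with hP
  set Q := coordProj (S.J p)ᶜ with hQ
  have hPu : ∀ z, S.Unst p (P z) := S.unst_proj p
  have hQs : ∀ z, S.Stab p (Q z) := S.stab_proj p
  have hPQ : ∀ z, P z + Q z = z := coordProj_add _
  have hUcont : Continuous fun z => χ (u (P z)) :=
    χ.continuousOn.comp_continuous (huc.comp_continuous P.continuous hPu) fun z => hmem _ (huα _ (hPu z))
  have hScont : Continuous fun z => χ (s (Q z)) :=
    χ.continuousOn.comp_continuous (hsc.comp_continuous Q.continuous hQs) fun z => hmem _ (hsα _ (hQs z))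
  let F : Eu n → Eu n := fun z => χ (u (P z)) - χ (s (Q z))
  let K : ℝ → Eu n → Eu n := fun t z => ((1 - t) • χ (u (P z)) + t • χ ω) - χ (s (Q z))
  have hF0 : ∀ z, z ≠ 0 → F z ≠ 0 := by
    intro z hz h
    have h1 := χ.injOn (hmem _ (huα _ (hPu z))) (hmem _ (hsα _ (hQs z))) (sub_eq_zero.1 h)
    obtain ⟨h2, h3⟩ := hus _ _ (hPu z) (hQs z) h1
    apply hz
    rw [← hPQ z, h2, h3, add_zero]
  have hKω : ∀ z, χ ω - χ (s (Q z)) ≠ 0 := by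
    intro z h
    have h1 := χ.injOn (hmem _ hωα) (hmem _ (hsα _ (hQs z))) (sub_eq_zero.1 h)
    exact hsω _ (hQs z) h1.symm
  have hKc : Continuous fun p : ℝ × Eu n => K p.1 p.2 := by
    have h1 := hUcont.comp (continuous_snd (X := ℝ) (Y := Eu n))
    have h2 := hScont.comp (continuous_snd (X := ℝ) (Y := Eu n))
    simp only [Function.comp_def] at h1 h2
    exact (((continuous_const.sub continuous_fst).smul h1).add (continuous_fst.smul continuous_const)).sub h2
  -- bound for u
  obtain ⟨C, hC⟩ : ∃ C : ℝ, ∀ z, ‖χ (u (P z))‖ ≤ C := by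
    obtain ⟨C, hC⟩ := ((isCompact_closedBall (0 : Eu n) (a + 1)).image hUcont).isBounded.exists_norm_le
    refine ⟨max C ‖χ ω‖, fun z => ?_⟩
    rcases le_or_gt ‖P z‖ (a + 1) with h | h
    · refine le_trans ?_ (le_max_left _ _)
      refine hC _ ⟨P z, by simpa using h, ?_⟩
      simp only
      rw [hP, coordProj_idem]
    · rw [huω _ (hPu z) h.le]
      exact le_max_right _ _
  set C' := max C ‖χ ω‖ with hC'
  obtain ⟨T, hT0, hT⟩ : ∃ T > (0:ℝ), ∀ z, T < ‖Q z‖ → C' < ‖χ (s (Q z))‖ := by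
    have hcomp : IsCompact (χ.symm '' Metric.closedBall (0 : Eu n) C') :=
      (isCompact_closedBall _ _).image_of_continuousOn (χ.continuousOn_symm.mono (by rw [hχt]; simp))
    have hnot : α ∉ χ.symm '' Metric.closedBall (0 : Eu n) C' := by
      rintro ⟨w, -, hw⟩
      have : χ.symm w ∈ χ.source := χ.map_target (by rw [hχt]; trivial)
      rw [hw, hχs] at this
      exact this rfl
    have hnb : S.φ α ⁻¹' (χ.symm '' Metric.closedBall (0 : Eu n) C')ᶜ ∈ 𝓝 (0 : Eu n) := by
      refine hcα.continuousAt.preimage_mem_nhds (hcomp.isClosed.isOpen_compl.mem_nhds ?_)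
      rw [S.zero α hα]; exact hnot
    obtain ⟨δ, hδ, hδs⟩ := Metric.mem_nhds_iff.1 hnb
    refine ⟨max b (b * r / δ), lt_max_of_lt_left hb, fun z hz => ?_⟩
    obtain ⟨y, -, hy1, -, hy2⟩ := hso' _ (hQs z) ((le_max_left _ _).trans_lt hz)
    have hz2 : b * r / δ < ‖Q z‖ := (le_max_right _ _).trans_lt hz
    have hQpos : 0 < ‖Q z‖ := hb.trans ((le_max_left _ _).trans_lt hz)
    have hyδ : ‖y‖ < δ := by
      refine hy1.trans_lt ?_
      rw [div_lt_iff₀ hδ] at hz2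
      rw [div_lt_iff₀ hQpos]
      linarith
    have h5 := hδs (mem_ball_zero_iff.2 hyδ)
    by_contra! hle
    apply h5
    rw [← hy2]
    exact ⟨χ (s (Q z)), by simpa using hle, χ.left_inv (hmem _ (hsα _ (hQs z)))⟩
  have hnull := fun ε hε => global_null F (hUcont.sub hScont) hF0 K hKc (by intro z; simp [K, F])
    (T + (a + 1) + 1) (by positivity) (by
      intro t ht z hz h
      rcases le_or_gt ‖Q z‖ T with hq | hq
      · have h1 : a + 1 ≤ ‖P z‖ := by
          have := norm_add_le (P z) (Q z)
          rw [hPQ, hz] at this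
          linarith
        simp only [K] at h
        rw [huω _ (hPu z) h1] at h
        apply hKω z
        rw [← h]
        module
      · have h1 := hT z hq
        have h2 := sub_eq_zero.1 h
        rw [← h2] at h1
        have h3 := norm_add_le ((1 - t) • χ (u (P z))) (t • χ ω)
        rw [norm_smul, norm_smul, Real.norm_eq_abs, Real.norm_eq_abs, abs_of_nonneg ht.1,
          abs_of_nonneg (sub_nonneg.2 ht.2)] at h3
        have h4 : ‖χ (u (P z))‖ ≤ C' := (hC z).trans (le_max_left _ _)
        have h5 : ‖χ ω‖ ≤ C' := le_max_right _ _
        nlinarith [mul_le_mul_of_nonneg_left h4 (sub_nonneg.2 ht.2), mul_le_mul_of_nonneg_left h5 ht.1])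
    (by intro z; simpa [K] using hKω z) ε hε
  let Φ := ((S.emb p hp).toOpenPartialHomeomorph (S.φ p)).trans χ
  have hΦ : ∀ z, Φ z = χ (S.φ p z) := fun z => rfl
  obtain ⟨ε0, hε0, hl⟩ := local_diff_not_null hn Φ (by simp [Φ, S.zero p hp, hχs, hpα])
    (by rw [hΦ, S.zero p hp, hχp]) P Q hPQ (coordProj_idem _) (coordProj_idem _) (coordProj_le _) (coordProj_le _)
    (coordProj_sub _)
  set ε := min ε0 (min a b) with hε
  have hεpos : 0 < ε := by positivity
  refine hl ε hεpos (min_le_left _ _) (K 1 0) ?_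
  convert hnull ε hεpos using 2 with z
  have e1 : ‖ε • P (z : Eu n)‖ ≤ ε := by
    rw [norm_smul, Real.norm_eq_abs, abs_of_pos hεpos]
    have := (coordProj_le (S.J p) (z : Eu n)).trans (norm_sph z).le
    nlinarith
  have e2 : ‖ε • Q (z : Eu n)‖ ≤ ε := by
    rw [norm_smul, Real.norm_eq_abs, abs_of_pos hεpos]
    have := (coordProj_le (S.J p)ᶜ (z : Eu n)).trans (norm_sph z).le
    nlinarith
  simp only [F]
  rw [hΦ, hΦ, ← map_smul P, ← map_smul Q]
  rw [← map_smul P] at e1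
  rw [← map_smul Q] at e2
  rw [hui _ (hPu _) (e1.trans ((min_le_right _ _).trans (min_le_left _ _))),
    hsi _ (hQs _) (e2.trans ((min_le_right _ _).trans (min_le_right _ _)))]

lemma no_saddle_of_sphere [CompactSpace M] (hn : 2 ≤ n) (S : HSys n M)
    (hcard : ∀ q ∈ S.R, S.J q ≠ ∅ → S.J q ≠ Finset.univ → 2 ≤ (S.J q).card ∧ 2 ≤ ((S.J q)ᶜ).card)
    (hhet : ∀ p ∈ S.R, ∀ q ∈ S.R, S.J p ≠ ∅ → S.J p ≠ Finset.univ → S.J q ≠ ∅ → S.J q ≠ Finset.univ →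
      p ≠ q → ∀ x y, S.Unst p x → S.Stab q y → S.φ p x ≠ S.φ q y)
    (e : M ≃ₜ (Metric.sphere (0 : EuclideanSpace ℝ (Fin (n + 1))) 1)) :
    ∀ q ∈ S.R, S.J q = ∅ ∨ S.J q = Finset.univ := by
  have hne : (∅ : Finset (Fin n)) ≠ Finset.univ := by
    intro h
    have := congrArg Finset.card h
    simp at this; omega
  intro p hp
  by_contra! hcon
  obtain ⟨hp1, hp2⟩ := hcon
  replace hp1 : S.J p ≠ ∅ := hp1.ne_empty
  obtain ⟨hc1, hc2⟩ := hcard p hp hp1 hp2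
  obtain ⟨ω, hω, hωs, hbu⟩ := S.basin hp hc1 (fun q hq hqp hq1 hq2 x y hx hy =>
    hhet p hp q hq hp1 hp2 hq1 hq2 hqp.symm x y hx hy)
  obtain ⟨α, hα, hαs, hbs⟩ := S.symm.basin (p := p) hp hc2 (fun q hq hqp hq1 hq2 x y hx hy => by
    rw [symm_unst] at hx
    rw [symm_stab] at hy
    refine (hhet q hq p hp ?_ ?_ hp1 hp2 hqp y x hy hx).symm
    · intro h; apply hq2; simp [symm, h]
    · intro h; apply hq1; simp [symm, h])
  replace hα : α ∈ S.R := hα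
  replace hαs : S.J α = Finset.univ := by simpa [symm] using hαs
  replace hbs : ∀ x, S.Stab p x → x ≠ 0 → S.φ p x ∈ Set.range (S.φ α) :=
    fun x hx => hbs x ((S.symm_unst p x).2 hx)
  have : Fact (Module.finrank ℝ (EuclideanSpace ℝ (Fin (n + 1))) = n + 1) := ⟨by simp⟩
  let χ0 : OpenPartialHomeomorph M (Eu n) := e.toOpenPartialHomeomorph.trans (stereographic' n (e α))
  let χ : OpenPartialHomeomorph M (Eu n) := χ0.transHomeomorph (Homeomorph.addRight (- χ0 p))
  refine S.contra (by omega) hp hω hα hωs hαs ?_ ?_ ?_ hbu hbs χ ?_ ?_ ?_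
  · rintro rfl; exact hp1 hωs
  · rintro rfl; exact hp2 hαs
  · rintro rfl; exact hne (hωs.symm.trans hαs)
  · ext x
    simp [χ, χ0]
  · ext x
    simp [χ, χ0]
  · simp [χ]

end HSys
end Cap

section Build
variable {n : ℕ} {M : Type*} [MetricSpace M]

lemma model_coord {i : ℕ} {δu δs : ℝ} (hu : δu = 1 ∨ δu = -1) (hs : δs = 1 ∨ δs = -1) (y : Eu n) (j : Fin n) :
    ((j : ℕ) < i → |modelMap n i δu δs y j| = 2 * |y j|) ∧
    (¬ (j : ℕ) < i → 2 * |modelMap n i δu δs y j| = |y j|) := by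
  constructor
  · intro h
    simp only [modelMap, h, if_true]
    split_ifs <;> rcases hu with rfl | rfl <;> simp [abs_mul]
  · intro h
    simp only [modelMap, h, if_false]
    split_ifs <;> rcases hs with rfl | rfl <;> simp [abs_mul, neg_div]

lemma model_surj {i : ℕ} {δu δs : ℝ} (hu : δu = 1 ∨ δu = -1) (hs : δs = 1 ∨ δs = -1) (y : Eu n) :
    ∃ y', modelMap n i δu δs y' = y := by
  have hu0 : δu ≠ 0 := by rcases hu with rfl | rfl <;> norm_num
  have hs0 : δs ≠ 0 := by rcases hs with rfl | rfl <;> norm_num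
  refine ⟨WithLp.toLp 2 fun j => if (j : ℕ) < i then (if (j : ℕ) = 0 then 2 * δu else 2)⁻¹ * y j
    else (if (j : ℕ) = i then δs / 2 else 1 / 2)⁻¹ * y j, ?_⟩
  ext j
  simp only [modelMap]
  split_ifs <;> field_simp

/-- Local linearising data at a periodic point. -/
def LocData (n : ℕ) (f : M ≃ₜ M) (p : M) (i : ℕ) (φ : Eu n → M) : Prop :=
  0 < Function.minimalPeriod f p ∧ IsOpenEmbedding φ ∧ φ 0 = p ∧
  (∀ (k : ℕ) (y : Eu n), ∃ y' : Eu n, f^[k * Function.minimalPeriod f p] (φ y) = φ y' ∧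
    (∀ j : Fin n, (j : ℕ) < i → |y' j| = 2 ^ k * |y j|) ∧
    (∀ j : Fin n, ¬ (j : ℕ) < i → 2 ^ k * |y' j| = |y j|)) ∧
  (∀ (k : ℕ) (y : Eu n), ∃ y' : Eu n, f.symm^[k * Function.minimalPeriod f p] (φ y) = φ y' ∧
    (∀ j : Fin n, (j : ℕ) < i → 2 ^ k * |y' j| = |y j|) ∧
    (∀ j : Fin n, ¬ (j : ℕ) < i → |y' j| = 2 ^ k * |y j|))

lemma exists_locData (f : M ≃ₜ M) {p : M} {i : ℕ} (h : TopHyperbolic n f p i) :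
    ∃ φ, LocData n f p i φ := by
  obtain ⟨m, hm, hper, hmin, δu, δs, hu, hs, U, hU, hpU, h, hconj⟩ := h
  subst hmin
  set m := Function.minimalPeriod f p with hmdef
  let φ : Eu n → M := fun y => ((h.symm y : U) : M)
  have hemb : IsOpenEmbedding φ := hU.isOpenEmbedding_subtypeVal.comp h.symm.isOpenEmbedding
  have hc : ∀ y, f^[m] (φ y) = φ (modelMap n i δu δs y) := by
    intro y
    have := hconj (h.symm y)
    rwa [h.apply_symm_apply] at this
  have hφh : φ (h ⟨p, hpU⟩) = p := by simp [φ]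
  have h0 : h ⟨p, hpU⟩ = 0 := by
    have h1 := hc (h ⟨p, hpU⟩)
    rw [hφh, hper.eq] at h1
    have h2 := hemb.injective (hφh.trans h1)
    ext j
    obtain ⟨h3, h4⟩ := model_coord (i := i) hu hs (h ⟨p, hpU⟩) j
    rw [← h2] at h3 h4
    have : |h ⟨p, hpU⟩ j| = 0 := by
      by_cases hj : (j : ℕ) < i
      · have := h3 hj; linarith
      · have := h4 hj; linarith
    simpa using this
  rw [h0] at hφh
  have hfwd : ∀ (k : ℕ) (y : Eu n), ∃ y' : Eu n, f^[k * m] (φ y) = φ y' ∧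
    (∀ j : Fin n, (j : ℕ) < i → |y' j| = 2 ^ k * |y j|) ∧
    (∀ j : Fin n, ¬ (j : ℕ) < i → 2 ^ k * |y' j| = |y j|) := by
    intro k
    induction k with
    | zero => intro y; exact ⟨y, by simp⟩
    | succ k ih =>
      intro y
      obtain ⟨y', h1, h2, h3⟩ := ih y
      refine ⟨modelMap n i δu δs y', ?_, ?_, ?_⟩
      · rw [add_mul, one_mul, add_comm, Function.iterate_add_apply, h1, hc]
      · intro j hj
        rw [(model_coord hu hs y' j).1 hj, h2 j hj]; ring
      · intro j hj
        rw [← h3 j hj, ← (model_coord hu hs y' j).2 hj]; ring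
  have hbase : ∀ y : Eu n, ∃ y', f^[m] (φ y') = φ y ∧ (∀ j : Fin n, (j : ℕ) < i → 2 * |y' j| = |y j|) ∧
      (∀ j : Fin n, ¬ (j : ℕ) < i → |y' j| = 2 * |y j|) := by
    intro y
    obtain ⟨y', rfl⟩ := model_surj (i := i) hu hs y
    exact ⟨y', hc y', fun j hj => ((model_coord hu hs y' j).1 hj).symm,
      fun j hj => ((model_coord hu hs y' j).2 hj).symm⟩
  refine ⟨φ, hm, hemb, hφh, hfwd, ?_⟩
  intro k
  induction k with
  | zero => intro y; exact ⟨y, by simp⟩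
  | succ k ih =>
    intro y
    obtain ⟨y', h1, h2, h3⟩ := ih y
    obtain ⟨y2, g1, g2, g3⟩ := hbase y'
    refine ⟨y2, ?_, ?_, ?_⟩
    · rw [add_mul, one_mul, add_comm, Function.iterate_add_apply, h1, ← g1, HSys.left_inv_iter]
    · intro j hj
      rw [← h2 j hj, ← g2 j hj]; ring
    · intro j hj
      rw [g3 j hj, h3 j hj]; ring

lemma tendsto_rates {φ : Eu n → M} (hφ : Continuous φ) {p : M} (h0 : φ 0 = p) (x : ℕ → M) (u : ℕ → Eu n)
    (hu : ∀ k, x k = φ (u k)) (c : Fin n → ℝ) (hc : ∀ k j, 2 ^ k * |u k j| = c j) :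
    Tendsto x atTop (𝓝 p) := by
  have : Tendsto u atTop (𝓝 0) := by
    refine HSys.tendsto_zero_of_coord fun j => ?_
    have h3 : ∀ k, |u k j| = (2:ℝ)⁻¹ ^ k * c j := fun k => by
      rw [← hc k j, inv_pow, ← mul_assoc, inv_mul_cancel₀ (by positivity), one_mul]
    simp only [h3]
    have := (tendsto_pow_atTop_nhds_zero_of_lt_one (r := (2:ℝ)⁻¹) (by positivity) (by norm_num)).mul_const (c j)
    simpa using this
  have h2 := (hφ.tendsto 0).comp this
  rw [h0] at h2
  exact h2.congr fun k => (hu k).symm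

lemma LocData.stable {f : M ≃ₜ M} {p : M} {i : ℕ} {φ : Eu n → M} (h : LocData n f p i φ) (y : Eu n)
    (hy : ∀ j : Fin n, (j : ℕ) < i → y j = 0) : φ y ∈ stableSet f p := by
  obtain ⟨-, hemb, h0, hf, -⟩ := h
  choose u h1 h2 h3 using fun k => hf k y
  refine tendsto_rates hemb.continuous h0 _ u h1 (fun j => |y j|) fun k j => ?_
  by_cases hj : (j : ℕ) < i
  · rw [h2 k j hj, hy j hj]; simp
  · exact h3 k j hj

lemma LocData.unstable {f : M ≃ₜ M} {p : M} {i : ℕ} {φ : Eu n → M} (h : LocData n f p i φ) (y : Eu n)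
    (hy : ∀ j : Fin n, ¬ (j : ℕ) < i → y j = 0) : φ y ∈ unstableSet f p := by
  obtain ⟨-, hemb, h0, -, hf⟩ := h
  choose u h1 h2 h3 using fun k => hf k y
  refine tendsto_rates hemb.continuous h0 _ u h1 (fun j => |y j|) fun k j => ?_
  by_cases hj : (j : ℕ) < i
  · exact h2 k j hj
  · rw [h3 k j hj, hy j hj]; simp

lemma chain_of_return (f : M ≃ₜ M) (z : M)
    (h : ∀ ε > (0:ℝ), ∃ y, ∃ r ≥ 2, dist y z < ε ∧ dist (f^[r] y) z < ε) : z ∈ chainRecurrentSet f := by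
  intro ε hε
  obtain ⟨δ, hδ, hδs⟩ := Metric.continuousAt_iff.1 (f.continuous.continuousAt (x := z)) ε hε
  obtain ⟨y, r, hr, h1, h2⟩ := h (min δ ε) (lt_min hδ hε)
  obtain ⟨r, rfl⟩ : ∃ r', r = r' + 1 := ⟨r - 1, by omega⟩
  refine ⟨2, by norm_num, ![z, f y, z], ![1, r], rfl, rfl, ?_, ?_⟩
  · intro i
    fin_cases i
    · simp
    · simp; omega
  · intro i
    fin_cases i
    · have := hδs (h1.trans_le (min_le_left _ _))
      rw [dist_comm]
      simpa using this
    · have := h2.trans_le (min_le_right _ _)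
      rw [Function.iterate_succ_apply] at this
      simpa using this

lemma periodic_mem (f : M ≃ₜ M) {n : ℕ} {p : M} {i : ℕ} (h : TopHyperbolic n f p i) : p ∈ chainRecurrentSet f := by
  obtain ⟨m, hm, hper, -⟩ := h
  intro ε hε
  refine ⟨1, one_pos, ![p, p], ![m], rfl, rfl, ?_, ?_⟩
  · intro i; fin_cases i; exact hm
  · intro i; fin_cases i
    simpa [hper.eq] using hε

lemma exists_sys (hn : 2 ≤ n) (f : M ≃ₜ M) (hf : RegularHomeo n f)
    (hind : ∀ p ∈ chainRecurrentSet (⇑f), ∀ i : ℕ, TopHyperbolic n f p i → i ≠ 1 ∧ i ≠ n - 1)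
    (hhet : ∀ p q : M, IsSaddlePt n f p → IsSaddlePt n f q → p ≠ q →
      unstableSet f p ∩ stableSet f q = ∅) :
    ∃ S : HSys n M, (∀ q ∈ S.R, S.J q ≠ ∅ → S.J q ≠ Finset.univ → 2 ≤ (S.J q).card ∧ 2 ≤ ((S.J q)ᶜ).card) ∧
      (∀ p ∈ S.R, ∀ q ∈ S.R, S.J p ≠ ∅ → S.J p ≠ Finset.univ → S.J q ≠ ∅ → S.J q ≠ Finset.univ →
        p ≠ q → ∀ x y, S.Unst p x → S.Stab q y → S.φ p x ≠ S.φ q y) ∧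
      ((∀ p, ¬ IsSaddlePt n f p) ↔ ∀ q ∈ S.R, S.J q = ∅ ∨ S.J q = Finset.univ) := by
  classical
  obtain ⟨hfin, hR⟩ := hf
  have hex : ∀ q, ∃ (i : ℕ) (φ : Eu n → M), q ∈ chainRecurrentSet f →
      i ≤ n ∧ TopHyperbolic n f q i ∧ (IsSaddlePt n f q → 0 < i ∧ i < n) ∧ LocData n f q i φ := by
    intro q
    by_cases hq : q ∈ chainRecurrentSet f
    · by_cases hs : IsSaddlePt n f q
      · obtain ⟨i, h1, h2, h3⟩ := hs
        obtain ⟨φ, hφ⟩ := exists_locData f h3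
        exact ⟨i, φ, fun _ => ⟨h2.le, h3, fun _ => ⟨h1, h2⟩, hφ⟩⟩
      · obtain ⟨i, h1, h3⟩ := hR q hq
        obtain ⟨φ, hφ⟩ := exists_locData f h3
        exact ⟨i, φ, fun _ => ⟨h1, h3, fun h => absurd h hs, hφ⟩⟩
    · exact ⟨0, fun _ => q, fun h => absurd h hq⟩
  choose i φ hi using hex
  set R := chainRecurrentSet f with hRdef
  let mp : M → ℕ := fun q => Function.minimalPeriod f q
  let N : ℕ := 2 * ∏ q ∈ hfin.toFinset, mp q
  have hpos : ∀ q ∈ R, 0 < mp q := fun q hq => (hi q hq).2.2.2.1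
  have hNpos : 2 ≤ N := by
    have : 0 < ∏ q ∈ hfin.toFinset, mp q := Finset.prod_pos fun q hq => hpos q (by simpa using hq)
    simp only [N]; omega
  let c : M → ℕ := fun q => N / mp q
  have hc : ∀ q ∈ R, c q * mp q = N := by
    intro q hq
    refine Nat.div_mul_cancel (Dvd.dvd.mul_left ?_ 2)
    exact Finset.dvd_prod_of_mem mp (by simpa using hq)
  have hcpos : ∀ q ∈ R, c q ≠ 0 := by
    intro q hq h
    have := hc q hq
    rw [h] at this; omega
  let G : M ≃ₜ M :=
    { toFun := f^[N]
      invFun := f.symm^[N]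
      left_inv := HSys.left_inv_iter f N
      right_inv := HSys.right_inv_iter f N
      continuous_toFun := f.continuous.iterate N
      continuous_invFun := f.symm.continuous.iterate N }
  have hG : ∀ r x, G^[r] x = f^[N * r] x := fun r x => by rw [Function.iterate_mul]; rfl
  have hG' : ∀ r x, G.symm^[r] x = f.symm^[N * r] x := fun r x => by rw [Function.iterate_mul]; rfl
  have hNr : ∀ q ∈ R, ∀ r, N * r = (c q * r) * Function.minimalPeriod f q := by
    intro q hq r
    rw [← hc q hq]; simp only [mp]; ring
  let S : HSys n M :=
    { G := G
      R := R
      fin := hfin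
      φ := φ
      J := fun q => Finset.univ.filter fun j : Fin n => (j : ℕ) < i q
      lam := fun q => 2 ^ c q
      lam_gt := fun q hq => one_lt_pow₀ one_lt_two (hcpos q hq)
      emb := fun q hq => (hi q hq).2.2.2.2.1
      zero := fun q hq => (hi q hq).2.2.2.2.2.1
      fwd := by
        intro q hq y r
        obtain ⟨y', h1, h2, h3⟩ := (hi q hq).2.2.2.2.2.2.1 (c q * r) y
        refine ⟨y', by rw [hG, hNr q hq, h1], ?_, ?_⟩
        · intro j hj
          rw [← pow_mul]; exact h2 j (by simpa using hj)
        · intro j hj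
          rw [← pow_mul]; exact h3 j (by simpa using hj)
      bwd := by
        intro q hq y r
        obtain ⟨y', h1, h2, h3⟩ := (hi q hq).2.2.2.2.2.2.2 (c q * r) y
        refine ⟨y', by rw [hG', hNr q hq, h1], ?_, ?_⟩
        · intro j hj
          rw [← pow_mul]; exact h2 j (by simpa using hj)
        · intro j hj
          rw [← pow_mul]; exact h3 j (by simpa using hj)
      lim := by
        intro z hz
        refine chain_of_return f z fun ε hε => ?_
        obtain ⟨y, r, hr, h1, h2⟩ := hz ε hε
        refine ⟨y, N * r, ?_, h1, by rwa [← hG]⟩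
        nlinarith }
  have hSJ : ∀ q, S.J q = Finset.univ.filter fun j : Fin n => (j : ℕ) < i q := fun q => rfl
  have hcard : ∀ q ∈ R, (S.J q).card = i q := by
    intro q hq
    have := (hi q hq).1
    rw [hSJ]
    simp [Fin.card_filter_val_lt, this]
  have hJ0 : ∀ q ∈ R, S.J q = ∅ ↔ i q = 0 := by
    intro q hq
    rw [← Finset.card_eq_zero, hcard q hq]
  have hJ1 : ∀ q ∈ R, S.J q = Finset.univ ↔ i q = n := by
    intro q hq
    rw [← Finset.card_eq_iff_eq_univ, hcard q hq, Fintype.card_fin]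
  have hsad : ∀ q ∈ R, S.J q ≠ ∅ → S.J q ≠ Finset.univ → IsSaddlePt n f q := by
    intro q hq h1 h2
    rw [Ne, hJ0 q hq] at h1
    rw [Ne, hJ1 q hq] at h2
    have := (hi q hq).1
    exact ⟨i q, by omega, by omega, (hi q hq).2.1⟩
  refine ⟨S, ?_, ?_, ?_⟩
  · intro q hq h1 h2
    replace hq : q ∈ R := hq
    rw [Ne, hJ0 q hq] at h1
    rw [Ne, hJ1 q hq] at h2
    rw [Finset.card_compl, hcard q hq, Fintype.card_fin]
    have h3 := hind q hq _ (hi q hq).2.1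
    have := (hi q hq).1
    omega
  · intro p hp q hq hp1 hp2 hq1 hq2 hpq x y hx hy h
    replace hp : p ∈ R := hp
    replace hq : q ∈ R := hq
    have h1 : φ p x ∈ unstableSet f p := (hi p hp).2.2.2.unstable x fun j hj => hx j (by simpa [hSJ] using hj)
    have h2 : φ q y ∈ stableSet f q := (hi q hq).2.2.2.stable y fun j hj => hy j (by simpa [hSJ] using hj)
    have h3 := hhet p q (hsad p hp hp1 hp2) (hsad q hq hq1 hq2) hpq
    have h4 : φ p x ∈ unstableSet f p ∩ stableSet f q := ⟨h1, (show φ p x = φ q y from h) ▸ h2⟩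
    rw [h3] at h4
    exact h4
  · constructor
    · intro hno q hq
      by_contra! hcon
      exact hno q (hsad q hq hcon.1.ne_empty hcon.2)
    · rintro hall p hp
      have hpR : p ∈ R := by
        obtain ⟨_, _, _, h⟩ := hp
        exact periodic_mem f h
      have h1 := (hi p hpR).2.2.1 hp
      rcases hall p hpR with h | h
      · rw [hJ0 p hpR] at h; omega
      · rw [hJ1 p hpR] at h; omega
end Build

/-- a regular homeomorphism of a closed connected topological
`n`-manifold (`n ≥ 2`) with no chain recurrent points of Morse index `1` or `n-1`
and without heteroclinic intersections: `M` is homeomorphic to the `n`-sphere `Sⁿ`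
if and only if `f` has no saddle periodic points. -/
theorem sphere_iff_no_saddles {n : ℕ} (hn : 2 ≤ n) {M : Type*}
    [MetricSpace M] [CompactSpace M] [ConnectedSpace M] [Nonempty M]
    (hM : IsChartedEuclidean n M)
    (f : M ≃ₜ M) (hf : RegularHomeo n f)
    (hind : ∀ p ∈ chainRecurrentSet (⇑f), ∀ i : ℕ,
      TopHyperbolic n f p i → i ≠ 1 ∧ i ≠ n - 1)
    (hhet : ∀ p q : M, IsSaddlePt n f p → IsSaddlePt n f q → p ≠ q →
      unstableSet f p ∩ stableSet f q = ∅) :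
    Nonempty (M ≃ₜ (Metric.sphere (0 : EuclideanSpace ℝ (Fin (n + 1))) 1)) ↔
      ∀ p : M, ¬ IsSaddlePt n f p := by
  obtain ⟨S, hcard, hh, hiff⟩ := exists_sys hn f hf hind hhet
  rw [hiff]
  constructor
  · rintro ⟨e⟩
    exact S.no_saddle_of_sphere hn hcard hh e
  · intro hns
    exact S.sphere_of_no_saddle hn hns
end
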